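/- arXiv:math/0212179 — 2 statements merged into one kernel-verified Lean document; each statement's English description precedes it below -/
import Mathlib

section
/- Let A ⊂ ℤⁿ be a finite set and C = diag(c_a)_{a∈A} positive definite, and consider the unmixed complex random polynomial system with A_1 = ⋯ = A_n = A and C_1 = ⋯ = C_n = C. Then the expected number of roots of f in (ℂ*)ⁿ equals n!·λ(Conv(A)): ∫_ℱ #{z ∈ (ℂ*)ⁿ : f¹(z) = ⋯ = fⁿ(z) = 0} dγ(f) = n!·λ(Conv(A)), where λ is Lebesgue measure on ℝⁿ and Conv(A) is the convex hull of A. -/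
open MeasureTheory Finset
open scoped ENNReal Pointwise

noncomputable section

namespace SparseRandom

variable {n : ℕ}

/-- `exp(p+iq) ∈ (ℂ*)ⁿ` in logarithmic coordinates. -/
def zexp (p q : Fin n → ℝ) : Fin n → ℂ :=
  fun j => Complex.exp ((p j : ℂ) + (q j : ℂ) * Complex.I)

/-- The (Laurent) monomial `z^a` for an integer exponent vector `a`. -/
def mono (z : Fin n → ℂ) (a : Fin n → ℤ) : ℂ := ∏ j, z j ^ (a j)

/-- Evaluation of the polynomial with support `A` and coefficient vector `f` at `z`. -/
def evalP {A : Finset (Fin n → ℤ)} (f : A → ℂ) (z : Fin n → ℂ) : ℂ :=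
  ∑ a : A, f a * mono z (a : Fin n → ℤ)

/-- The squared weighted norm `‖f‖²_{C⁻¹} = ∑_a |f_a|²/c_a`. -/
def nsq {A : Finset (Fin n → ℤ)} (c : (Fin n → ℤ) → ℝ) (f : A → ℂ) : ℝ :=
  ∑ a : A, Complex.normSq (f a) / c (a : Fin n → ℤ)

/-- The Gaussian probability measure `γ = ⊗ᵢ γ_{Aᵢ,Cᵢ}` on the system space
`ℱ = Πᵢ ℱ_ℂ(Aᵢ)`, given by its density w.r.t. Lebesgue measure. -/
def gauss (A : Fin n → Finset (Fin n → ℤ)) (c : Fin n → (Fin n → ℤ) → ℝ) :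
    Measure ((i : Fin n) → (A i) → ℂ) :=
  volume.withDensity fun f => ENNReal.ofReal
    (∏ i, (((2 * Real.pi) ^ (A i).card)⁻¹ * (∏ a : A i, c i (a : Fin n → ℤ))⁻¹ *
      Real.exp (- nsq (c i) (f i) / 2)))

/-- `z` is a common root of the system `f`. -/
def isRootAt (A : Fin n → Finset (Fin n → ℤ)) (f : (i : Fin n) → (A i) → ℂ)
    (z : Fin n → ℂ) : Prop :=
  ∀ i, evalP (f i) z = 0

/-- The Jacobian matrix `(∂f^i/∂x_j)` of the system `f` at a point `z ∈ (ℂ*)ⁿ`. -/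
def jac (A : Fin n → Finset (Fin n → ℤ)) (f : (i : Fin n) → (A i) → ℂ)
    (z : Fin n → ℂ) : Matrix (Fin n) (Fin n) ℂ :=
  Matrix.of fun i j => ∑ a : A i, f i a * ((a : Fin n → ℤ) j : ℂ) * mono z (a : Fin n → ℤ) / z j

/-- The matrix `D̂(f)_{ij} = z_j ∂f^i/∂x_j(z)`, i.e. the derivative of the system in the
logarithmic variable `p+iq`. -/
def Dhat (A : Fin n → Finset (Fin n → ℤ)) (f : (i : Fin n) → (A i) → ℂ)
    (z : Fin n → ℂ) : Matrix (Fin n) (Fin n) ℂ :=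
  Matrix.of fun i j => ∑ a : A i, f i a * ((a : Fin n → ℤ) j : ℂ) * mono z (a : Fin n → ℤ)

/-- `Σ_{(p,q)}`: systems with `exp(p+iq)` as a degenerate root. -/
def SigmaPQ (A : Fin n → Finset (Fin n → ℤ)) (p q : Fin n → ℝ) :
    Set ((i : Fin n) → (A i) → ℂ) :=
  {g | isRootAt A g (zexp p q) ∧ (jac A g (zexp p q)).det = 0}

/-- Multiprojective distance `d_ℙ(f,g)`. -/
def dP (c : Fin n → (Fin n → ℤ) → ℝ) {A : Fin n → Finset (Fin n → ℤ)}
    (f g : (i : Fin n) → (A i) → ℂ) : ℝ :=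
  Real.sqrt (∑ i, (⨅ lam : ℂ, nsq (c i) (fun a => f i a - lam * g i a)) / nsq (c i) (f i))

/-- Distance from `f` to a set `S` of systems. -/
def dPS (c : Fin n → (Fin n → ℤ) → ℝ) {A : Fin n → Finset (Fin n → ℤ)}
    (f : (i : Fin n) → (A i) → ℂ) (S : Set ((i : Fin n) → (A i) → ℂ)) : ℝ :=
  sInf ((dP c f) '' S)

/-- The image of `A ⊂ ℤⁿ` in `ℝⁿ`. -/
def coeA (A : Finset (Fin n → ℤ)) : Set (Fin n → ℝ) :=
  (fun (a : Fin n → ℤ) (j : Fin n) => (a j : ℝ)) '' (A : Set (Fin n → ℤ))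

/-- The Kähler potential `g_A(p) = ½ log ∑_{a∈A} c_a e^{2⟨a,p⟩}`. -/
def gA (A : Finset (Fin n → ℤ)) (c : (Fin n → ℤ) → ℝ) (p : Fin n → ℝ) : ℝ :=
  (1 / 2) * Real.log (∑ a : A, c (a : Fin n → ℤ) * Real.exp (2 * ∑ j, ((a : Fin n → ℤ) j : ℝ) * p j))

/-- `H_A(p) = ½ ∇² g_A(p)`, half the Hessian of the Kähler potential. -/
def HessA (A : Finset (Fin n → ℤ)) (c : (Fin n → ℤ) → ℝ) (p : Fin n → ℝ) :
    Matrix (Fin n) (Fin n) ℝ :=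
  Matrix.of fun j k =>
    (1 / 2) * fderiv ℝ (fun x => fderiv ℝ (gA A c) x (Pi.single j 1)) p (Pi.single k 1)

/-- The mixed integrand `I(p)`, the coefficient of the volume form in
`(−1)^{n(n−1)/2} ω_{A_1} ∧ ⋯ ∧ ω_{A_n}`. -/
def mixedI (A : Fin n → Finset (Fin n → ℤ)) (c : Fin n → (Fin n → ℤ) → ℝ)
    (p : Fin n → ℝ) : ℝ :=
  ∑ σ : Equiv.Perm (Fin n), ∑ τ : Equiv.Perm (Fin n),
    ((Equiv.Perm.sign σ : ℤ) : ℝ) * ((Equiv.Perm.sign τ : ℤ) : ℝ) *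
      ∏ i, HessA (A i) (c i) p (σ i) (τ i)

end SparseRandom

open SparseRandom

/-!
In logarithmic coordinates the roots are the zeros, in a strip of `ℂⁿ` of height `2π`, of the system
`w ↦ ⟨fⁱ, v w⟩`, where `v` is the Veronese map `w ↦ (exp ⟨a, w⟩)_{a ∈ A}`. The area formula for
`(w, f) ↦ (⟨f, v w⟩, f)` expresses their expected number as the integral over `w` of the density of
`⟨f, v w⟩` at `0` times the conditional expectation of `|det Df(w)|²` given `⟨f, v w⟩ = 0`
(the Kac–Rice formula). Given this condition the rows of `Df(w)` are still independent Gaussian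
vectors, so by Andréief's identity that expectation is `n!` times the determinant of their
covariance matrix. All powers of `2π` and of the norm of `v w` cancel, and what is left is
`n! / πⁿ` times the determinant of the covariance matrix of the Gibbs distribution on `A` with
weights proportional to `c_a exp ⟨a, 2 Re w⟩`.

This covariance matrix is the Jacobian of the mean of the Gibbs distribution as a function of its
parameter, the moment map, which takes almost every point of `Conv(A)` exactly once and takes no
value outside `Conv(A)`. By the area formula once more, the integral of the determinant over
`p = 2 Re w` is the volume of `Conv(A)`.

Translating `A` multiplies `v` by a nonvanishing function, so we may assume `0 ∈ A`. Adding constants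
to the polynomials then moves the value of `f` at all points `w` simultaneously, which is what makes
the zeros of a fixed system accessible to the area formula.
-/

namespace SparseRandom

section AreaFormula

variable {E : Type*} [NormedAddCommGroup E] [NormedSpace ℝ E] [FiniteDimensional ℝ E]
  {f : E → E} {S : Set E}

lemma exists_forall_injOn_of_approximatesLinearOn (f : E → E) (A : E →L[ℝ] E) :
    ∃ r : NNReal, r ≠ 0 ∧
      (A.det ≠ 0 → ∀ s : Set E, ApproximatesLinearOn f A s r → Set.InjOn f s) := by
  by_cases hA : A.det = 0
  · exact ⟨1, one_ne_zero, fun h => absurd hA h⟩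
  set e : E ≃L[ℝ] E := A.toContinuousLinearEquivOfDetNeZero hA with he
  have hAe : A = (e : E →L[ℝ] E) := by simp [he]
  rcases e.subsingleton_or_nnnorm_symm_pos with hE | hpos
  · exact ⟨1, one_ne_zero, fun _ s hs => (hAe ▸ hs).injOn (Or.inl hE)⟩
  · exact ⟨‖(e.symm : E →L[ℝ] E)‖₊⁻¹ / 2, (half_pos (inv_pos.2 hpos)).ne', fun _ s hs =>
      (hAe ▸ hs).injOn (Or.inr (half_lt_self (inv_pos.2 hpos)))⟩

lemma indicator_image_eq_encard_inter_fiber {α β : Type*} {g : α → β} {W : Set α}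
    (hg : Set.InjOn g W) (y : β) :
    (g '' W).indicator (fun _ => (1 : ℝ≥0∞)) y = ((W ∩ g ⁻¹' {y}).encard : ℝ≥0∞) := by
  by_cases hy : y ∈ g '' W
  · obtain ⟨x, hx, rfl⟩ := hy
    have hfiber : W ∩ g ⁻¹' {g x} = {x} := by
      ext x'
      exact ⟨fun h => hg h.1 hx h.2, by rintro rfl; exact ⟨hx, rfl⟩⟩
    simp [hfiber, Set.mem_image_of_mem g hx]
  · have hfiber : W ∩ g ⁻¹' {y} = ∅ :=
      Set.eq_empty_of_forall_notMem fun x hx => hy ⟨x, hx.1, hx.2⟩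
    simp [hfiber, Set.indicator_of_notMem hy]

variable [MeasurableSpace E] [BorelSpace E]

lemma measurableSet_inter_det_fderiv_ne_zero (hS : MeasurableSet S) :
    MeasurableSet (S ∩ {x | (fderiv ℝ f x).det ≠ 0}) :=
  hS.inter ((ContinuousLinearMap.continuous_det.measurable.comp (measurable_fderiv ℝ f))
    (measurableSet_singleton 0).compl)

lemma exists_measurable_partition_injOn (hf : Differentiable ℝ f) (hS : MeasurableSet S) :
    ∃ W : ℕ → Set E, (∀ k, MeasurableSet (W k)) ∧ Pairwise (Function.onFun Disjoint W) ∧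
      (∀ k, Set.InjOn f (W k)) ∧ ⋃ k, W k = S ∩ {x | (fderiv ℝ f x).det ≠ 0} := by
  set R : Set E := S ∩ {x | (fderiv ℝ f x).det ≠ 0}
  choose r hr0 hr using exists_forall_injOn_of_approximatesLinearOn f
  obtain ⟨t, A, htd, htm, hRt, hA, hAR⟩ :=
    exists_partition_approximatesLinearOn_of_hasFDerivWithinAt f R (fderiv ℝ f)
      (fun x _ => (hf x).hasFDerivAt.hasFDerivWithinAt) r hr0
  refine ⟨fun k => R ∩ t k, fun k => (measurableSet_inter_det_fderiv_ne_zero hS).inter (htm k),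
    fun i j hij => (htd hij).mono Set.inter_subset_right Set.inter_subset_right, fun k => ?_, ?_⟩
  · rcases R.eq_empty_or_nonempty with hempty | hne
    · simp [hempty]
    · obtain ⟨y, hy, hAy⟩ := hAR hne k
      exact hr (A k) (hAy ▸ hy.2) _ (hA k)
  · rw [← Set.inter_iUnion, Set.inter_eq_left.2 hRt]

variable (μ : Measure E) [μ.IsAddHaarMeasure]

lemma encard_fiber_ae_eq_tsum (hf : Differentiable ℝ f) {W : ℕ → Set E}
    (hWm : ∀ k, MeasurableSet (W k)) (hWd : Pairwise (Function.onFun Disjoint W))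
    (hWi : ∀ k, Set.InjOn f (W k))
    (hWU : ⋃ k, W k = S ∩ {x | (fderiv ℝ f x).det ≠ 0}) :
    ∀ᵐ y ∂μ, ((S ∩ f ⁻¹' {y}).encard : ℝ≥0∞) =
      ∑' k, (f '' W k).indicator (fun _ => (1 : ℝ≥0∞)) y := by
  have hcritical : μ (f '' {x | (fderiv ℝ f x).det = 0}) = 0 :=
    addHaar_image_eq_zero_of_det_fderivWithin_eq_zero μ
      (fun x _ => (hf x).hasFDerivAt.hasFDerivWithinAt) fun x hx => hx
  filter_upwards [measure_eq_zero_iff_ae_notMem.1 hcritical] with y hy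
  have hfiber : S ∩ f ⁻¹' {y} = ⋃ k, W k ∩ f ⁻¹' {y} := by
    rw [← Set.iUnion_inter, hWU]
    ext x
    exact ⟨fun hx => ⟨⟨hx.1, fun h0 => hy ⟨x, h0, hx.2⟩⟩, hx.2⟩, fun hx => ⟨hx.1.1, hx.2⟩⟩
  have hm : ∀ k, MeasurableSet (W k ∩ f ⁻¹' {y}) := fun k =>
    (hWm k).inter (hf.continuous.measurable (measurableSet_singleton y))
  rw [hfiber, ← Measure.count_apply (MeasurableSet.iUnion hm), measure_iUnion
    (fun i j hij => (hWd hij).mono Set.inter_subset_left Set.inter_subset_left) hm]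
  exact tsum_congr fun k => by
    rw [Measure.count_apply (hm k), indicator_image_eq_encard_inter_fiber (hWi k)]

lemma aemeasurable_encard_fiber (hf : Differentiable ℝ f) (hS : MeasurableSet S) :
    AEMeasurable (fun y => ((S ∩ f ⁻¹' {y}).encard : ℝ≥0∞)) μ := by
  obtain ⟨W, hWm, hWd, hWi, hWU⟩ := exists_measurable_partition_injOn hf hS
  refine AEMeasurable.congr (Measurable.aemeasurable ?_)
    (Filter.EventuallyEq.symm (encard_fiber_ae_eq_tsum μ hf hWm hWd hWi hWU))
  exact Measurable.tsum fun k => measurable_const.indicator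
    (measurable_image_of_fderivWithin (hWm k)
      (fun x _ => (hf x).hasFDerivAt.hasFDerivWithinAt) (hWi k))

theorem lintegral_encard_fiber_mul (hf : Differentiable ℝ f) (hS : MeasurableSet S)
    {ρ : E → ℝ≥0∞} (hρ : Measurable ρ) :
    ∫⁻ y, ((S ∩ f ⁻¹' {y}).encard : ℝ≥0∞) * ρ y ∂μ =
      ∫⁻ x in S, ENNReal.ofReal |(fderiv ℝ f x).det| * ρ (f x) ∂μ := by
  obtain ⟨W, hWm, hWd, hWi, hWU⟩ := exists_measurable_partition_injOn hf hS
  have hder : ∀ k, ∀ x ∈ W k, HasFDerivWithinAt f (fderiv ℝ f x) (W k) x :=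
    fun _ x _ => (hf x).hasFDerivAt.hasFDerivWithinAt
  have himage : ∀ k, MeasurableSet (f '' W k) := fun k =>
    measurable_image_of_fderivWithin (hWm k) (hder k) (hWi k)
  calc ∫⁻ y, ((S ∩ f ⁻¹' {y}).encard : ℝ≥0∞) * ρ y ∂μ
      = ∫⁻ y, ∑' k, (f '' W k).indicator ρ y ∂μ := by
        refine lintegral_congr_ae ?_
        filter_upwards [encard_fiber_ae_eq_tsum μ hf hWm hWd hWi hWU] with y hy
        rw [hy, ← ENNReal.tsum_mul_right]
        exact tsum_congr fun k => by by_cases h : y ∈ f '' W k <;> simp [h]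
    _ = ∑' k, ∫⁻ x in W k, ENNReal.ofReal |(fderiv ℝ f x).det| * ρ (f x) ∂μ := by
        rw [lintegral_tsum fun k => (hρ.indicator (himage k)).aemeasurable]
        exact tsum_congr fun k => by
          rw [lintegral_indicator (himage k), lintegral_image_eq_lintegral_abs_det_fderiv_mul μ
            (hWm k) (hder k) (hWi k)]
    _ = ∫⁻ x in S ∩ {x | (fderiv ℝ f x).det ≠ 0},
          ENNReal.ofReal |(fderiv ℝ f x).det| * ρ (f x) ∂μ := by
        rw [← hWU, lintegral_iUnion hWm hWd]
    _ = ∫⁻ x in S, ENNReal.ofReal |(fderiv ℝ f x).det| * ρ (f x) ∂μ := by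
        rw [← lintegral_indicator (measurableSet_inter_det_fderiv_ne_zero hS),
          ← lintegral_indicator hS]
        refine lintegral_congr fun x => ?_
        by_cases hx : x ∈ S <;> by_cases h0 : (fderiv ℝ f x).det = 0 <;> simp [hx, h0]

end AreaFormula

section ChangeOfSection

variable {X T : Type*} [AddCommGroup X] [MeasurableSpace X] [MeasurableAdd₂ X] [MeasurableSub₂ X]
  [AddCommGroup T] [MeasurableSpace T] [MeasurableAdd T] [MeasurableSub₂ T] [MeasurableNeg T]
  {μ : Measure X} [SFinite μ] [μ.IsAddRightInvariant]
  {ν : Measure T} [SFinite ν] [ν.IsAddLeftInvariant] [ν.IsNegInvariant]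

/- The two sides are exchanged by `(x, t) ↦ (x - s (ℓ x) + s' t, ℓ x)`, which is a composition of
three translations fibred over one of the factors. -/
lemma lintegral_mul_lintegral_comp_sub_section {ℓ : X →+ T} (hℓ : Measurable ℓ) {s s' : T → X}
    (hs : Measurable s) (hs' : Measurable s') (hℓs : ∀ t, ℓ (s t) = t) (hℓs' : ∀ t, ℓ (s' t) = t)
    {f : X → ℝ≥0∞} {φ ψ : T → ℝ≥0∞} (hf : Measurable f) (hφ : Measurable φ) (hψ : Measurable ψ) :
    (∫⁻ t, ψ t ∂ν) * ∫⁻ x, f (x - s (ℓ x)) * φ (ℓ x) ∂μ =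
      (∫⁻ t, φ t ∂ν) * ∫⁻ x, f (x - s' (ℓ x)) * ψ (ℓ x) ∂μ := by
  calc (∫⁻ t, ψ t ∂ν) * ∫⁻ x, f (x - s (ℓ x)) * φ (ℓ x) ∂μ
      = ∫⁻ t, ∫⁻ x, ψ t * (f (x - s (ℓ x)) * φ (ℓ x)) ∂μ ∂ν := by
        rw [← lintegral_mul_const _ hψ]
        exact lintegral_congr fun t => (lintegral_const_mul _ (by fun_prop)).symm
    _ = ∫⁻ t, ∫⁻ x, ψ t * (f (x - s' t - s (ℓ x - t)) * φ (ℓ x - t)) ∂μ ∂ν :=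
        lintegral_congr fun t => by
          rw [← lintegral_sub_right_eq_self _ (s' t)]
          simp only [map_sub, hℓs']
    _ = ∫⁻ x, ∫⁻ t, ψ t * (f (x - s' t - s (ℓ x - t)) * φ (ℓ x - t)) ∂ν ∂μ :=
        lintegral_lintegral_swap (by fun_prop)
    _ = ∫⁻ x, ∫⁻ t, ψ (ℓ x - t) * (f (x - s' (ℓ x - t) - s t) * φ t) ∂ν ∂μ :=
        lintegral_congr fun x => by
          rw [← lintegral_sub_left_eq_self _ (ℓ x)]
          simp only [sub_sub_cancel]
    _ = ∫⁻ t, ∫⁻ x, ψ (ℓ x - t) * (f (x - s' (ℓ x - t) - s t) * φ t) ∂μ ∂ν :=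
        lintegral_lintegral_swap (by fun_prop)
    _ = ∫⁻ t, ∫⁻ x, φ t * (f (x - s' (ℓ x)) * ψ (ℓ x)) ∂μ ∂ν :=
        lintegral_congr fun t => by
          rw [← lintegral_add_right_eq_self _ (s t)]
          refine lintegral_congr fun x => ?_
          rw [map_add, hℓs, add_sub_cancel_right, add_sub_right_comm, add_sub_cancel_right]
          ring
    _ = (∫⁻ t, φ t ∂ν) * ∫⁻ x, f (x - s' (ℓ x)) * ψ (ℓ x) ∂μ := by
        rw [← lintegral_mul_const _ hφ]
        exact lintegral_congr fun t => lintegral_const_mul _ (by fun_prop)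

end ChangeOfSection

section Andreief

variable {κ : Type*} [Fintype κ] [DecidableEq κ] {α : Type*} [MeasurableSpace α] {μ : Measure α}
  [SigmaFinite μ]

lemma integrable_det_pi {H : κ → κ → α → ℂ} (hH : ∀ i j, Integrable (H i j) μ) :
    Integrable (fun x : κ → α => (Matrix.of fun i j => H i j (x i)).det)
      (Measure.pi fun _ => μ) := by
  simp only [← Matrix.det_transpose (Matrix.of _), Matrix.det_apply', Matrix.transpose_apply,
    Matrix.of_apply]
  exact integrable_finsetSum _ fun σ _ =>
    (Integrable.fintype_prod fun i => hH i (σ i)).const_mul _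

lemma integral_det_pi {H : κ → κ → α → ℂ} (hH : ∀ i j, Integrable (H i j) μ) :
    ∫ x : κ → α, (Matrix.of fun i j => H i j (x i)).det ∂Measure.pi (fun _ => μ) =
      (Matrix.of fun i j => ∫ x, H i j x ∂μ).det := by
  simp only [← Matrix.det_transpose (Matrix.of _), Matrix.det_apply', Matrix.transpose_apply,
    Matrix.of_apply]
  rw [integral_finsetSum _ fun σ _ =>
    (Integrable.fintype_prod fun i => hH i (σ i)).const_mul _]
  refine Finset.sum_congr rfl fun σ _ => ?_
  rw [integral_const_mul, integral_fintype_prod_eq_prod]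

lemma det_mul_det_eq_sum_perm {R : Type*} [CommRing R] (M N : Matrix κ κ R) :
    M.det * N.det =
      ∑ σ : Equiv.Perm κ, (σ.sign : R) * (Matrix.of fun i j => N i (σ i) * M i j).det := by
  rw [← Matrix.det_transpose N, Matrix.det_apply' N.transpose, Finset.mul_sum]
  refine Finset.sum_congr rfl fun σ _ => ?_
  rw [Matrix.det_mul_column]
  simp only [Matrix.transpose_apply]
  ring

variable {f g : κ → α → ℂ}

lemma integrable_det_mul_det (hfg : ∀ i j, Integrable (fun x => g i x * f j x) μ) :
    Integrable (fun x : κ → α => (Matrix.of fun i j => f j (x i)).det *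
      (Matrix.of fun i j => g j (x i)).det) (Measure.pi fun _ => μ) := by
  simp only [det_mul_det_eq_sum_perm, Matrix.of_apply]
  exact integrable_finsetSum _ fun σ _ =>
    (integrable_det_pi fun i j => hfg (σ i) j).const_mul _

theorem integral_det_mul_det (hfg : ∀ i j, Integrable (fun x => g i x * f j x) μ) :
    ∫ x : κ → α, (Matrix.of fun i j => f j (x i)).det * (Matrix.of fun i j => g j (x i)).det
        ∂Measure.pi (fun _ => μ) =
      (Fintype.card κ).factorial * (Matrix.of fun i j => ∫ x, g i x * f j x ∂μ).det := by
  simp only [det_mul_det_eq_sum_perm, Matrix.of_apply]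
  rw [integral_finsetSum _ fun σ _ => (integrable_det_pi fun i j => hfg (σ i) j).const_mul _]
  have hterm : ∀ σ : Equiv.Perm κ,
      ∫ x : κ → α, (σ.sign : ℂ) * (Matrix.of fun i j => g (σ i) (x i) * f j (x i)).det
        ∂Measure.pi (fun _ => μ) = (Matrix.of fun i j => ∫ x, g i x * f j x ∂μ).det := by
    intro σ
    have hpermute := Matrix.det_permute σ (Matrix.of fun i j => ∫ x, g i x * f j x ∂μ)
    rw [integral_const_mul, integral_det_pi fun i j => hfg (σ i) j]
    have hsq : (σ.sign : ℂ) * (σ.sign : ℂ) = 1 := by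
      rcases Int.units_eq_one_or σ.sign with h | h <;> simp [h]
    rw [show (Matrix.of fun i j => ∫ x, g (σ i) x * f j x ∂μ) =
      (Matrix.of fun i j => ∫ x, g i x * f j x ∂μ).submatrix σ id from rfl, hpermute,
      ← mul_assoc, hsq, one_mul]
  simp only [hterm, Finset.sum_const, Finset.card_univ, Fintype.card_perm, nsmul_eq_mul]

end Andreief

section ComplexJacobian

lemma det_eq_det_fst_comp_inl {R M N : Type*} [CommRing R] [AddCommGroup M] [AddCommGroup N]
    [Module R M] [Module R N] [Module.Free R M] [Module.Finite R M] [Module.Free R N]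
    [Module.Finite R N] (f : M × N →ₗ[R] M × N)
    (hf : LinearMap.snd R M N ∘ₗ f = LinearMap.snd R M N) :
    LinearMap.det f = LinearMap.det (LinearMap.fst R M N ∘ₗ f ∘ₗ LinearMap.inl R M N) := by
  let b := Module.Free.chooseBasis R M
  let b' := Module.Free.chooseBasis R N
  have hsnd : ∀ x, (f x).2 = x.2 := fun x => LinearMap.congr_fun hf x
  have hblocks : LinearMap.toMatrix (b.prod b') (b.prod b') f = Matrix.fromBlocks
      (LinearMap.toMatrix b b (LinearMap.fst R M N ∘ₗ f ∘ₗ LinearMap.inl R M N))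
      (LinearMap.toMatrix b' b (LinearMap.fst R M N ∘ₗ f ∘ₗ LinearMap.inr R M N)) 0 1 := by
    ext (i | i) (j | j) <;>
      simp [LinearMap.toMatrix_apply, hsnd, Matrix.one_apply, Finsupp.single_apply, eq_comm]
  rw [← LinearMap.det_toMatrix (b.prod b'), hblocks, Matrix.det_fromBlocks_zero₂₁,
    LinearMap.det_toMatrix, Matrix.det_one, mul_one]

variable {E : Type*} [NormedAddCommGroup E] [NormedSpace ℂ E]

lemma det_fderiv_real_eq_normSq {f : E → E} {x : E} (hf : DifferentiableAt ℂ f x) :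
    (fderiv ℝ f x).det = Complex.normSq (fderiv ℂ f x).det := by
  rw [hf.fderiv_restrictScalars ℝ, ← Algebra.norm_complex_apply, ContinuousLinearMap.det,
    ContinuousLinearMap.det, ← LinearMap.det_restrictScalars]
  rfl

end ComplexJacobian

section KacRice

open scoped Matrix

variable {κ ι : Type*} [Fintype ι]

/-- The values `⟨F i, x⟩` of the linear forms with coefficient vectors `F i`, additively in `F`. -/
def evalForms (x : ι → ℂ) : (κ → ι → ℂ) →+ (κ → ℂ) where
  toFun F i := F i ⬝ᵥ x
  map_zero' := by ext; simp
  map_add' F G := by ext; simp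

lemma evalForms_apply (x : ι → ℂ) (F : κ → ι → ℂ) (i : κ) :
    evalForms x F i = F i ⬝ᵥ x := rfl

lemma measurable_evalForms (x : ι → ℂ) : Measurable (evalForms (κ := κ) x) :=
  measurable_pi_lambda _ fun i => by
    simp only [evalForms_apply, dotProduct]; fun_prop

/-- The system whose `i`-th form has coefficient vector `y i • u`. For `⟨u, x⟩ = 1` this gives a
section `y ↦ rankOne u y` of `evalForms x`. -/
def rankOne (u : ι → ℂ) (y : κ → ℂ) : κ → ι → ℂ := fun i => y i • u

omit [Fintype ι] in
lemma measurable_rankOne (u : ι → ℂ) : Measurable (rankOne (κ := κ) u) :=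
  measurable_pi_lambda _ fun i => by unfold rankOne; fun_prop

lemma evalForms_rankOne {x u : ι → ℂ} (h : u ⬝ᵥ x = 1) (y : κ → ℂ) :
    evalForms x (rankOne u y) = y := by
  ext i
  rw [evalForms_apply, rankOne, smul_dotProduct, h, smul_eq_mul, mul_one]

variable {v : (κ → ℂ) → ι → ℂ} {S : Set (κ → ℂ)}

/-- The number of solutions `w ∈ S` of the system `⟨F i, v w⟩ = 0`. -/
def zeroCount (S : Set (κ → ℂ)) (v : (κ → ℂ) → ι → ℂ) (F : κ → ι → ℂ) : ℝ≥0∞ :=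
  (S ∩ {w | evalForms (v w) F = 0}).encard

/-- The map `(w, F) ↦ (⟨F i, v w⟩ᵢ, F)`. The fiber over `(0, F)` is the zero set of `F`, so the
area formula for this map counts zeros. -/
def evalGraph (v : (κ → ℂ) → ι → ℂ) (x : (κ → ℂ) × (κ → ι → ℂ)) : (κ → ℂ) × (κ → ι → ℂ) :=
  (evalForms (v x.1) x.2, x.2)

lemma encard_fiber_evalGraph {e : ι → ℂ} (he : ∀ w, e ⬝ᵥ v w = 1) (h : κ → ℂ) (F : κ → ι → ℂ) :
    ((S ×ˢ Set.univ ∩ evalGraph v ⁻¹' {(h, F)}).encard : ℝ≥0∞) =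
      zeroCount S v (F - rankOne e h) := by
  have hfiber : S ×ˢ Set.univ ∩ evalGraph v ⁻¹' {(h, F)} =
      (fun w => (w, F)) '' (S ∩ {w | evalForms (v w) (F - rankOne e h) = 0}) := by
    ext ⟨w, G⟩
    simp only [evalGraph, map_sub, evalForms_rankOne (he _), sub_eq_zero, Set.mem_inter_iff,
      Set.mem_prod, Set.mem_univ, and_true, Set.mem_preimage, Set.mem_singleton_iff, Prod.mk.injEq,
      Set.mem_image, Set.mem_ofPred_eq]
    constructor
    · rintro ⟨hw, rfl, rfl⟩
      exact ⟨w, ⟨hw, rfl⟩, rfl, rfl⟩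
    · rintro ⟨w, ⟨hw, rfl⟩, rfl, rfl⟩
      exact ⟨hw, rfl, rfl⟩
  rw [hfiber, (Prod.mk_left_injective F).encard_image, zeroCount]

lemma differentiable_evalGraph [Finite κ] (hv : Differentiable ℂ v) :
    Differentiable ℂ (evalGraph v) := by
  cases nonempty_fintype κ
  refine Differentiable.prodMk (differentiable_pi.2 fun i => ?_) differentiable_snd
  simp only [evalForms_apply, dotProduct]
  fun_prop

section Jacobian

variable [DecidableEq κ]

/-- The matrix of partial derivatives `∂v_k/∂w_j` of a holomorphic map `v`. -/
def jacobianMatrix (v : (κ → ℂ) → ι → ℂ) (w : κ → ℂ) : Matrix ι κ ℂ :=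
  Matrix.of fun k j => fderiv ℂ v w (Pi.single j 1) k

lemma vecMul_jacobianMatrix_eq_zero [Finite κ] (hv : Differentiable ℂ v) {e : ι → ℂ}
    (he : ∀ w, e ⬝ᵥ v w = 1) (w : κ → ℂ) : e ᵥ* jacobianMatrix v w = 0 := by
  cases nonempty_fintype κ
  have hderiv : HasFDerivAt (fun w => e ⬝ᵥ v w)
      (∑ k, e k • (ContinuousLinearMap.proj k).comp (fderiv ℂ v w)) w :=
    HasFDerivAt.fun_sum fun k _ =>
      ((hasFDerivAt_apply k (v w)).comp w (hv w).hasFDerivAt).const_mul (e k)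
  have hzero := hderiv.unique ((hasFDerivAt_const 1 w).congr_of_eventuallyEq
    (Filter.Eventually.of_forall he))
  ext j
  simpa [Matrix.vecMul, dotProduct, jacobianMatrix] using
    DFunLike.congr_fun hzero (Pi.single j 1)

lemma of_rankOne_mul_jacobianMatrix [Finite κ] (hv : Differentiable ℂ v) {e : ι → ℂ}
    (he : ∀ w, e ⬝ᵥ v w = 1) (w y : κ → ℂ) :
    Matrix.of (rankOne e y) * jacobianMatrix v w = 0 := by
  rw [show Matrix.of (rankOne e y) = Matrix.vecMulVec y e from rfl, Matrix.vecMulVec_mul,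
    vecMul_jacobianMatrix_eq_zero hv he, Matrix.vecMulVec_zero]

end Jacobian

variable [Fintype κ]

instance isAddHaarMeasure_volume_systems : (volume : Measure (κ → ι → ℂ)).IsAddHaarMeasure :=
  Measure.pi.isAddHaarMeasure _

instance isAddHaarMeasure_volume_points_prod_systems :
    (volume : Measure ((κ → ℂ) × (κ → ι → ℂ))).IsAddHaarMeasure :=
  Measure.prod.instIsAddHaarMeasure _ _

lemma aemeasurable_zeroCount_sub_rankOne (hv : Differentiable ℂ v) (hS : MeasurableSet S)
    {e : ι → ℂ} (he : ∀ w, e ⬝ᵥ v w = 1) :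
    AEMeasurable fun x : (κ → ℂ) × (κ → ι → ℂ) => zeroCount S v (x.2 - rankOne e x.1) := by
  have := aemeasurable_encard_fiber (volume : Measure ((κ → ℂ) × (κ → ι → ℂ)))
    ((differentiable_evalGraph hv).restrictScalars ℝ) (hS.prod MeasurableSet.univ)
  simpa only [encard_fiber_evalGraph he] using this

lemma aemeasurable_zeroCount (hv : Differentiable ℂ v) (hS : MeasurableSet S)
    {e : ι → ℂ} (he : ∀ w, e ⬝ᵥ v w = 1) : AEMeasurable (zeroCount S v) := by
  obtain ⟨y, hy⟩ := (AEStronglyMeasurable.prodMk_left (μ := (volume : Measure (κ → ℂ)))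
    (ν := (volume : Measure (κ → ι → ℂ)))
    (aemeasurable_zeroCount_sub_rankOne hv hS he).aestronglyMeasurable).exists
  have := hy.aemeasurable.comp_quasiMeasurePreserving
    (measurePreserving_add_right volume (rankOne e y)).quasiMeasurePreserving
  simpa only [Function.comp_def, add_sub_cancel_right] using this

variable [DecidableEq κ]

lemma det_fderiv_evalGraph (hv : Differentiable ℂ v) (w : κ → ℂ) (F : κ → ι → ℂ) :
    (fderiv ℂ (evalGraph v) (w, F)).det = (Matrix.of F * jacobianMatrix v w).det := by
  have hgraph := (differentiable_evalGraph hv (w, F)).hasFDerivAt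
  have hsnd : (LinearMap.snd ℂ (κ → ℂ) (κ → ι → ℂ)) ∘ₗ
      (fderiv ℂ (evalGraph v) (w, F)).toLinearMap = LinearMap.snd ℂ _ _ := by
    have := (hasFDerivAt_snd (𝕜 := ℂ) (p := evalGraph v (w, F))).comp (w, F) hgraph
    exact congrArg ContinuousLinearMap.toLinearMap (this.unique hasFDerivAt_snd)
  have hinl : (LinearMap.fst ℂ (κ → ℂ) (κ → ι → ℂ)) ∘ₗ
      (fderiv ℂ (evalGraph v) (w, F)).toLinearMap ∘ₗ LinearMap.inl ℂ _ _ =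
        (Matrix.of F).mulVecLin ∘ₗ (fderiv ℂ v w).toLinearMap := by
    have h1 := (hasFDerivAt_fst (𝕜 := ℂ) (p := evalGraph v (w, F))).comp w
      (hgraph.comp w (hasFDerivAt_prodMk_left (𝕜 := ℂ) w F))
    have h2 := (LinearMap.toContinuousLinearMap (Matrix.of F).mulVecLin).hasFDerivAt.comp w
      (hv w).hasFDerivAt
    exact congrArg ContinuousLinearMap.toLinearMap (h1.unique h2)
  rw [ContinuousLinearMap.det, det_eq_det_fst_comp_inl _ hsnd, hinl, ← LinearMap.det_toMatrix']
  rfl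

lemma lintegral_zeroCount_sub_rankOne_mul (hv : Differentiable ℂ v) (hS : MeasurableSet S)
    {e : ι → ℂ} (he : ∀ w, e ⬝ᵥ v w = 1) {ρ : (κ → ℂ) × (κ → ι → ℂ) → ℝ≥0∞} (hρ : Measurable ρ) :
    ∫⁻ x : (κ → ℂ) × (κ → ι → ℂ), zeroCount S v (x.2 - rankOne e x.1) * ρ x =
      ∫⁻ w in S, ∫⁻ F : κ → ι → ℂ,
        ENNReal.ofReal (Complex.normSq (Matrix.of F * jacobianMatrix v w).det) *
          ρ (evalForms (v w) F, F) := by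
  have hgraph := (differentiable_evalGraph (ι := ι) hv).restrictScalars ℝ
  have harea := lintegral_encard_fiber_mul volume hgraph (hS.prod MeasurableSet.univ) hρ
  have hm : Measurable fun x : (κ → ℂ) × (κ → ι → ℂ) =>
      ENNReal.ofReal |(fderiv ℝ (evalGraph v) x).det| * ρ (evalGraph v x) :=
    ((ContinuousLinearMap.continuous_det.measurable.comp
      (measurable_fderiv ℝ _)).abs.ennreal_ofReal).mul (hρ.comp hgraph.continuous.measurable)
  simp only [encard_fiber_evalGraph he] at harea
  rw [harea, Measure.volume_eq_prod, setLIntegral_prod _ hm.aemeasurable.restrict]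
  simp only [Measure.restrict_univ]
  refine lintegral_congr fun w => lintegral_congr fun F => ?_
  rw [det_fderiv_real_eq_normSq (differentiable_evalGraph hv _), det_fderiv_evalGraph hv,
    abs_of_nonneg (Complex.normSq_nonneg _), evalGraph]

lemma lintegral_mul_lintegral_zeroCount_mul (hv : Differentiable ℂ v) (hS : MeasurableSet S)
    {e : ι → ℂ} (he : ∀ w, e ⬝ᵥ v w = 1) {φ : (κ → ℂ) → ℝ≥0∞} (hφ : Measurable φ)
    {ρ : (κ → ι → ℂ) → ℝ≥0∞} (hρ : Measurable ρ) :
    (∫⁻ y, φ y) * ∫⁻ F, zeroCount S v F * ρ F =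
      ∫⁻ w in S, ∫⁻ F : κ → ι → ℂ,
        ENNReal.ofReal (Complex.normSq (Matrix.of F * jacobianMatrix v w).det) *
          (φ (evalForms (v w) F) * ρ (F - rankOne e (evalForms (v w) F))) := by
  have hm : Measurable fun x : (κ → ℂ) × (κ → ι → ℂ) => φ x.1 * ρ (x.2 - rankOne e x.1) :=
    (hφ.comp measurable_fst).mul
      (hρ.comp (measurable_snd.sub ((measurable_rankOne e).comp measurable_fst)))
  rw [← lintegral_zeroCount_sub_rankOne_mul hv hS he hm, ← lintegral_mul_const _ hφ,
    Measure.volume_eq_prod, lintegral_prod _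
      ((aemeasurable_zeroCount_sub_rankOne hv hS he).fun_mul hm.aemeasurable)]
  refine lintegral_congr fun y => ?_
  rw [← lintegral_sub_right_eq_self _ (rankOne e y), ← lintegral_const_mul'']
  · exact lintegral_congr fun F => by ring
  · exact ((aemeasurable_zeroCount hv hS he).mul hρ.aemeasurable).comp_quasiMeasurePreserving
      (measurePreserving_sub_right volume (rankOne e y)).quasiMeasurePreserving

theorem lintegral_zeroCount_mul (hv : Differentiable ℂ v) (hS : MeasurableSet S)
    {e : ι → ℂ} (he : ∀ w, e ⬝ᵥ v w = 1) {u : (κ → ℂ) → ι → ℂ} (hu : ∀ w, u w ⬝ᵥ v w = 1)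
    {ψ : (κ → ℂ) → (κ → ℂ) → ℝ≥0∞} (hψ : ∀ w, Measurable (ψ w)) (hψ1 : ∀ w, ∫⁻ y, ψ w y = 1)
    {ρ : (κ → ι → ℂ) → ℝ≥0∞} (hρ : Measurable ρ) :
    ∫⁻ F, zeroCount S v F * ρ F =
      ∫⁻ w in S, ∫⁻ F : κ → ι → ℂ,
        ENNReal.ofReal (Complex.normSq
            (Matrix.of (F - rankOne (u w) (evalForms (v w) F)) * jacobianMatrix v w).det) *
          ρ (F - rankOne (u w) (evalForms (v w) F)) * ψ w (evalForms (v w) F) := by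
  rw [← one_mul (∫⁻ F, _), ← hψ1 0, lintegral_mul_lintegral_zeroCount_mul hv hS he (hψ 0) hρ]
  refine lintegral_congr fun w => ?_
  have hf : Measurable fun F : κ → ι → ℂ =>
      ENNReal.ofReal (Complex.normSq (Matrix.of F * jacobianMatrix v w).det) * ρ F := by
    have hcont : Continuous fun F : κ → ι → ℂ => (Matrix.of F * jacobianMatrix v w).det :=
      (Continuous.matrix_mul (A := fun F : κ → ι → ℂ => Matrix.of F) continuous_id
        continuous_const).matrix_det
    exact (Complex.continuous_normSq.comp hcont).measurable.ennreal_ofReal.mul hρ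
  have := lintegral_mul_lintegral_comp_sub_section (μ := (volume : Measure (κ → ι → ℂ)))
    (ν := (volume : Measure (κ → ℂ))) (measurable_evalForms (v w)) (measurable_rankOne e)
    (measurable_rankOne (u w)) (evalForms_rankOne (he w)) (evalForms_rankOne (hu w)) hf
    (hψ 0) (hψ w)
  rw [hψ1, hψ1, one_mul, one_mul] at this
  rw [← this]
  refine lintegral_congr fun F => ?_
  rw [← Matrix.of_sub_of, Matrix.sub_mul, of_rankOne_mul_jacobianMatrix hv he, sub_zero, mul_assoc,
    mul_comm (ψ 0 _)]

end KacRice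

section Gaussian

open scoped Matrix ComplexConjugate Nat

/-- The density of the centred complex Gaussian variable whose real and imaginary parts are
independent of variance `σ` each; the second moment `𝔼|z|²` is `2σ`. -/
def complexGaussianPDF (σ : ℝ) (z : ℂ) : ℝ :=
  (2 * Real.pi * σ)⁻¹ * Real.exp (-Complex.normSq z / (2 * σ))

lemma continuous_complexGaussianPDF (σ : ℝ) : Continuous (complexGaussianPDF σ) := by
  unfold complexGaussianPDF; fun_prop

section OneVariable

variable {σ : ℝ}

lemma complexGaussianPDF_nonneg (hσ : 0 ≤ σ) (z : ℂ) : 0 ≤ complexGaussianPDF σ z := by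
  unfold complexGaussianPDF; positivity

lemma integral_norm_pow_mul_complexGaussianPDF (hσ : 0 < σ) (m : ℕ) :
    ∫ z : ℂ, ‖z‖ ^ (2 * m) * complexGaussianPDF σ z = m ! * (2 * σ) ^ m := by
  have h := Complex.integral_rpow_mul_exp_neg_mul_rpow (p := 2) (q := (2 * m : ℕ)) (b := (2 * σ)⁻¹)
    (by norm_num) (by linarith [(2 * m).cast_nonneg (α := ℝ)]) (by positivity)
  have hpdf (z : ℂ) : ‖z‖ ^ (2 * m) * complexGaussianPDF σ z = (2 * Real.pi * σ)⁻¹ *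
      (‖z‖ ^ ((2 * m : ℕ) : ℝ) * Real.exp (-(2 * σ)⁻¹ * ‖z‖ ^ (2 : ℝ))) := by
    rw [complexGaussianPDF, Complex.normSq_eq_norm_sq, Real.rpow_natCast, Real.rpow_two, neg_div,
      div_eq_inv_mul, ← neg_mul, mul_left_comm]
  have hexp : (((2 * m : ℕ) : ℝ) + 2) / 2 = (m + 1 : ℕ) := by push_cast; ring
  simp_rw [hpdf]
  rw [integral_const_mul, h, neg_div, hexp, Real.rpow_neg (by positivity), Real.rpow_natCast,
    ← Real.Gamma_nat_eq_factorial, Nat.cast_succ, inv_pow, inv_inv, pow_succ]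
  field_simp

lemma integral_complexGaussianPDF (hσ : 0 < σ) : ∫ z, complexGaussianPDF σ z = 1 := by
  simpa using integral_norm_pow_mul_complexGaussianPDF hσ 0

lemma integrable_complexGaussianPDF (hσ : 0 < σ) : Integrable (complexGaussianPDF σ) :=
  .of_integral_ne_zero (by rw [integral_complexGaussianPDF hσ]; exact one_ne_zero)

lemma integral_normSq_mul_complexGaussianPDF (hσ : 0 < σ) :
    ∫ z, Complex.normSq z * complexGaussianPDF σ z = 2 * σ := by
  simpa [Complex.normSq_eq_norm_sq] using integral_norm_pow_mul_complexGaussianPDF hσ 1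

lemma integrable_normSq_mul_complexGaussianPDF (hσ : 0 < σ) :
    Integrable fun z => Complex.normSq z * complexGaussianPDF σ z :=
  .of_integral_ne_zero (by rw [integral_normSq_mul_complexGaussianPDF hσ]; positivity)

lemma integrable_mul_complexGaussianPDF (hσ : 0 < σ) :
    Integrable fun z : ℂ => z * (complexGaussianPDF σ z : ℂ) := by
  refine ((integrable_complexGaussianPDF hσ).add
    (integrable_normSq_mul_complexGaussianPDF hσ)).mono' ?_ (.of_forall fun z => ?_)
  · exact (continuous_id.mul (Complex.continuous_ofReal.comp
      (continuous_complexGaussianPDF σ))).aestronglyMeasurable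
  · have hpdf := complexGaussianPDF_nonneg hσ.le z
    have hnorm : ‖z‖ ≤ 1 + ‖z‖ ^ 2 := by nlinarith [sq_nonneg (‖z‖ - 1)]
    rw [norm_mul, Complex.norm_of_nonneg hpdf, Pi.add_apply, Complex.normSq_eq_norm_sq,
      ← one_add_mul]
    gcongr

lemma integral_mul_complexGaussianPDF (σ : ℝ) :
    ∫ z : ℂ, z * (complexGaussianPDF σ z : ℂ) = 0 := by
  have h := integral_neg_eq_self (fun z : ℂ => z * (complexGaussianPDF σ z : ℂ)) volume
  simp only [complexGaussianPDF, Complex.normSq_neg, neg_mul, integral_neg] at h ⊢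
  exact self_eq_neg.mp h.symm

lemma integrable_conj_mul_complexGaussianPDF (hσ : 0 < σ) :
    Integrable fun z : ℂ => conj z * (complexGaussianPDF σ z : ℂ) := by
  simpa using (RCLike.conjLIE (K := ℂ)).integrable_comp_iff.2 (integrable_mul_complexGaussianPDF hσ)

lemma integral_conj_mul_complexGaussianPDF (σ : ℝ) :
    ∫ z : ℂ, conj z * (complexGaussianPDF σ z : ℂ) = 0 := by
  simpa [integral_mul_complexGaussianPDF] using
    integral_conj (μ := volume) (f := fun z : ℂ => z * (complexGaussianPDF σ z : ℂ))

end OneVariable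

variable {ι : Type*} [Fintype ι] {c : ι → ℝ}

/-- The density of a vector of independent centred complex Gaussian variables, the `k`-th of which
has density `complexGaussianPDF (c k)`. -/
def gaussianVectorPDF (c : ι → ℝ) (x : ι → ℂ) : ℝ := ∏ k, complexGaussianPDF (c k) (x k)

lemma gaussianVectorPDF_nonneg (hc : ∀ k, 0 < c k) (x : ι → ℂ) : 0 ≤ gaussianVectorPDF c x :=
  prod_nonneg fun k _ => complexGaussianPDF_nonneg (hc k).le _

lemma continuous_gaussianVectorPDF (c : ι → ℝ) : Continuous (gaussianVectorPDF c) :=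
  continuous_finsetProd _ fun k _ => (continuous_complexGaussianPDF (c k)).comp (continuous_apply k)

lemma lintegral_prod_complexGaussianPDF {σ : ℝ} (hσ : 0 < σ) :
    ∫⁻ y : ι → ℂ, ENNReal.ofReal (∏ i, complexGaussianPDF σ (y i)) = 1 := by
  have hint : Integrable fun y : ι → ℂ => ∏ i, complexGaussianPDF σ (y i) :=
    Integrable.fintype_prod (f := fun _ : ι => complexGaussianPDF σ)
      fun _ => integrable_complexGaussianPDF hσ
  rw [← ofReal_integral_eq_lintegral_ofReal hint
      (.of_forall fun y => prod_nonneg fun i _ => complexGaussianPDF_nonneg hσ.le _),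
    integral_fintype_prod_volume_eq_prod fun _ : ι => complexGaussianPDF σ]
  simp only [integral_complexGaussianPDF hσ, prod_const_one, ENNReal.ofReal_one]

section Covariance

lemma integrable_ite_mul_ite_mul_complexGaussianPDF {σ : ℝ} (hσ : 0 < σ) (p q : Prop) [Decidable p]
    [Decidable q] :
    Integrable fun z : ℂ =>
      (if p then z else 1) * (if q then conj z else 1) * (complexGaussianPDF σ z : ℂ) := by
  split_ifs
  · simp_rw [Complex.mul_conj, ← Complex.ofReal_mul]
    exact (integrable_normSq_mul_complexGaussianPDF hσ).ofReal
  · simpa using integrable_mul_complexGaussianPDF hσ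
  · simpa using integrable_conj_mul_complexGaussianPDF hσ
  · simp_rw [one_mul]
    exact (integrable_complexGaussianPDF hσ).ofReal

lemma integral_ite_mul_ite_mul_complexGaussianPDF {σ : ℝ} (hσ : 0 < σ) (p q : Prop) [Decidable p]
    [Decidable q] :
    ∫ z : ℂ, (if p then z else 1) * (if q then conj z else 1) * (complexGaussianPDF σ z : ℂ) =
      if p then if q then 2 * (σ : ℂ) else 0 else if q then 0 else 1 := by
  split_ifs
  · simp_rw [Complex.mul_conj, ← Complex.ofReal_mul]
    rw [integral_complex_ofReal, integral_normSq_mul_complexGaussianPDF hσ]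
    push_cast; rfl
  · simpa using integral_mul_complexGaussianPDF σ
  · simpa using integral_conj_mul_complexGaussianPDF σ
  · simp_rw [one_mul]
    rw [integral_complex_ofReal, integral_complexGaussianPDF hσ, Complex.ofReal_one]

lemma mul_conj_mul_gaussianVectorPDF [DecidableEq ι] (c : ι → ℝ) (a b : ι) (x : ι → ℂ) :
    x a * conj (x b) * (gaussianVectorPDF c x : ℂ) = ∏ k, (if k = a then x k else 1) *
      (if k = b then conj (x k) else 1) * (complexGaussianPDF (c k) (x k) : ℂ) := by
  simp only [gaussianVectorPDF, prod_mul_distrib, prod_ite_eq', mem_univ, if_true,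
    Complex.ofReal_prod]

lemma integrable_mul_conj_mul_gaussianVectorPDF (hc : ∀ k, 0 < c k) (a b : ι) :
    Integrable fun x : ι → ℂ => x a * conj (x b) * (gaussianVectorPDF c x : ℂ) := by
  classical
  simp_rw [mul_conj_mul_gaussianVectorPDF]
  exact Integrable.fintype_prod fun k =>
    integrable_ite_mul_ite_mul_complexGaussianPDF (hc k) (k = a) (k = b)

lemma integral_mul_conj_mul_gaussianVectorPDF [DecidableEq ι] (hc : ∀ k, 0 < c k) (a b : ι) :
    ∫ x : ι → ℂ, x a * conj (x b) * (gaussianVectorPDF c x : ℂ) =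
      if a = b then 2 * (c a : ℂ) else 0 := by
  simp_rw [mul_conj_mul_gaussianVectorPDF]
  rw [integral_fintype_prod_volume_eq_prod fun k (z : ℂ) => (if k = a then z else 1) *
    (if k = b then conj z else 1) * (complexGaussianPDF (c k) z : ℂ)]
  simp_rw [fun k => integral_ite_mul_ite_mul_complexGaussianPDF (hc k) (k = a) (k = b)]
  by_cases hab : a = b
  · rw [if_pos hab, prod_eq_single_of_mem a (mem_univ a)] <;> simp +contextual [hab]
  · rw [if_neg hab]
    exact prod_eq_zero (mem_univ a) (by rw [if_pos rfl, if_neg hab])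

lemma dotProduct_mul_conj_mul_gaussianVectorPDF (c : ι → ℝ) (r s x : ι → ℂ) :
    (x ⬝ᵥ r) * conj (x ⬝ᵥ s) * (gaussianVectorPDF c x : ℂ) =
      ∑ a, ∑ b, r a * conj (s b) * (x a * conj (x b) * (gaussianVectorPDF c x : ℂ)) := by
  rw [dotProduct, dotProduct, map_sum, sum_mul_sum, sum_mul]
  refine sum_congr rfl fun a _ => ?_
  rw [sum_mul]
  exact sum_congr rfl fun b _ => by rw [map_mul]; ring

lemma integrable_dotProduct_mul_conj_mul_gaussianVectorPDF (hc : ∀ k, 0 < c k) (r s : ι → ℂ) :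
    Integrable fun x => (x ⬝ᵥ r) * conj (x ⬝ᵥ s) * (gaussianVectorPDF c x : ℂ) := by
  simp_rw [dotProduct_mul_conj_mul_gaussianVectorPDF]
  exact integrable_finsetSum _ fun a _ => integrable_finsetSum _ fun b _ =>
    (integrable_mul_conj_mul_gaussianVectorPDF hc a b).const_mul _

lemma integral_dotProduct_mul_conj_mul_gaussianVectorPDF (hc : ∀ k, 0 < c k) (r s : ι → ℂ) :
    ∫ x, (x ⬝ᵥ r) * conj (x ⬝ᵥ s) * (gaussianVectorPDF c x : ℂ) =
      ∑ k, 2 * (c k : ℂ) * (r k * conj (s k)) := by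
  classical
  have hint (a b : ι) := (integrable_mul_conj_mul_gaussianVectorPDF hc a b).const_mul
    (r a * conj (s b))
  simp_rw [dotProduct_mul_conj_mul_gaussianVectorPDF]
  rw [integral_finsetSum _ fun a _ => integrable_finsetSum _ fun b _ => hint a b]
  refine sum_congr rfl fun a _ => ?_
  rw [integral_finsetSum _ fun b _ => hint a b]
  simp_rw [integral_const_mul, integral_mul_conj_mul_gaussianVectorPDF hc, mul_ite, mul_zero]
  rw [sum_ite_eq, if_pos (mem_univ a), mul_comm]

end Covariance

section Determinant

variable {κ : Type*}

/-- The covariance matrix of the random vector `x ᵥ* R`, for `x` with density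
`gaussianVectorPDF c`. -/
def vecMulCovariance (c : ι → ℝ) (R : Matrix ι κ ℂ) : Matrix κ κ ℂ :=
  Matrix.of fun j l => ∑ k, 2 * (c k : ℂ) * (R k j * conj (R k l))

lemma integrable_mul_conj_vecMul_gaussianVectorPDF (hc : ∀ k, 0 < c k) (R : Matrix ι κ ℂ)
    (j l : κ) :
    Integrable fun x => (x ᵥ* R) j * (gaussianVectorPDF c x : ℂ) * conj ((x ᵥ* R) l) := by
  simpa only [mul_right_comm, Matrix.vecMul] using
    integrable_dotProduct_mul_conj_mul_gaussianVectorPDF hc (fun k => R k j) (fun k => R k l)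

lemma integral_mul_conj_vecMul_gaussianVectorPDF (hc : ∀ k, 0 < c k) (R : Matrix ι κ ℂ) (j l : κ) :
    ∫ x, (x ᵥ* R) j * (gaussianVectorPDF c x : ℂ) * conj ((x ᵥ* R) l) =
      vecMulCovariance c R j l := by
  simpa only [mul_right_comm, Matrix.vecMul, vecMulCovariance, Matrix.of_apply] using
    integral_dotProduct_mul_conj_mul_gaussianVectorPDF hc (fun k => R k j) (fun k => R k l)

variable [Fintype κ] [DecidableEq κ]

lemma normSq_det_mul_prod_gaussianVectorPDF (c : ι → ℝ) (R : Matrix ι κ ℂ) (F : κ → ι → ℂ) :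
    ((Complex.normSq (Matrix.of F * R).det * ∏ i, gaussianVectorPDF c (F i) : ℝ) : ℂ) =
      (Matrix.of fun i j => conj ((F i ᵥ* R) j)).det *
        (Matrix.of fun i j => (F i ᵥ* R) j * gaussianVectorPDF c (F i)).det := by
  have hconj : (Matrix.of fun i j => conj ((F i ᵥ* R) j)).det = conj (Matrix.of F * R).det :=
    (RingHom.map_det (starRingEnd ℂ) _).symm
  have hweight : (Matrix.of fun i j => (F i ᵥ* R) j * (gaussianVectorPDF c (F i) : ℂ)).det =
      (∏ i, (gaussianVectorPDF c (F i) : ℂ)) * (Matrix.of F * R).det := by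
    simp_rw [mul_comm _ (gaussianVectorPDF c _ : ℂ)]
    exact Matrix.det_mul_column _ (Matrix.of F * R)
  rw [hconj, hweight, Complex.ofReal_mul, Complex.ofReal_prod, Complex.normSq_eq_conj_mul_self]
  ring

theorem lintegral_normSq_det_mul_prod_gaussianVectorPDF (hc : ∀ k, 0 < c k) (R : Matrix ι κ ℂ) :
    ∫⁻ F : κ → ι → ℂ, ENNReal.ofReal
        (Complex.normSq (Matrix.of F * R).det * ∏ i, gaussianVectorPDF c (F i)) =
      ENNReal.ofReal ((Fintype.card κ)! * (vecMulCovariance c R).det.re) := by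
  have hint := integrable_det_mul_det (μ := volume)
    (integrable_mul_conj_vecMul_gaussianVectorPDF hc R)
  have hval := integral_det_mul_det (μ := volume)
    (integrable_mul_conj_vecMul_gaussianVectorPDF hc R)
  simp only [← normSq_det_mul_prod_gaussianVectorPDF,
    integral_mul_conj_vecMul_gaussianVectorPDF hc, ← volume_pi] at hint hval
  have hint_re : Integrable fun F : κ → ι → ℂ =>
      Complex.normSq (Matrix.of F * R).det * ∏ i, gaussianVectorPDF c (F i) := hint.re
  rw [← ofReal_integral_eq_lintegral_ofReal hint_re
    (.of_forall fun F => mul_nonneg (Complex.normSq_nonneg _)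
      (prod_nonneg fun i _ => gaussianVectorPDF_nonneg hc _))]
  congr 1
  rw [← Complex.ofReal_re (∫ F, _), ← integral_complex_ofReal, hval, ← Complex.ofReal_natCast,
    Complex.re_ofReal_mul]
  rfl

end Determinant

section Conditioning

/-- Half the variance of `x ⬝ᵥ v`, for `x` with density `gaussianVectorPDF c`. -/
def dotProductVariance (c : ι → ℝ) (v : ι → ℂ) : ℝ := ∑ k, c k * Complex.normSq (v k)

/-- The direction of regression of `x` on `x ⬝ᵥ v`, for `x` with density `gaussianVectorPDF c`: the
difference `x - (x ⬝ᵥ v) • regressionVector c v` is independent of `x ⬝ᵥ v`. -/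
def regressionVector (c : ι → ℝ) (v : ι → ℂ) : ι → ℂ :=
  fun k => c k * conj (v k) / dotProductVariance c v

lemma dotProductVariance_pos (hc : ∀ k, 0 < c k) {v : ι → ℂ} (hv : v ≠ 0) :
    0 < dotProductVariance c v := by
  obtain ⟨k, hk⟩ := Function.ne_iff.1 hv
  exact sum_pos' (fun l _ => mul_nonneg (hc l).le (Complex.normSq_nonneg _))
    ⟨k, mem_univ k, mul_pos (hc k) (Complex.normSq_pos.2 hk)⟩

lemma regressionVector_dotProduct (hc : ∀ k, 0 < c k) {v : ι → ℂ} (hv : v ≠ 0) :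
    regressionVector c v ⬝ᵥ v = 1 := by
  have hK : (dotProductVariance c v : ℂ) ≠ 0 :=
    Complex.ofReal_ne_zero.2 (dotProductVariance_pos hc hv).ne'
  simp only [dotProduct, regressionVector, div_mul_eq_mul_div, ← sum_div, div_eq_one_iff_eq hK]
  simp only [dotProductVariance, mul_assoc, ← Complex.normSq_eq_conj_mul_self]
  push_cast
  rfl

lemma sum_normSq_sub_smul_regressionVector_div (hc : ∀ k, 0 < c k) {v : ι → ℂ} (hv : v ≠ 0)
    (x : ι → ℂ) :
    ∑ k, Complex.normSq (x k - (x ⬝ᵥ v) * regressionVector c v k) / c k +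
        Complex.normSq (x ⬝ᵥ v) / dotProductVariance c v =
      ∑ k, Complex.normSq (x k) / c k := by
  have hK := dotProductVariance_pos hc hv
  set K := dotProductVariance c v with hKdef
  set t := x ⬝ᵥ v
  have hterm (k : ι) : Complex.normSq (x k - t * regressionVector c v k) / c k =
      Complex.normSq (x k) / c k + Complex.normSq t / K ^ 2 * (c k * Complex.normSq (v k)) -
        2 / K * (x k * v k * conj t).re := by
    have hck := (hc k).ne'
    have hcross : (x k * conj (t * regressionVector c v k)).re =
        c k / K * (x k * v k * conj t).re := by
      rw [← Complex.re_ofReal_mul]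
      congr 1
      simp only [regressionVector, map_mul, map_div₀, Complex.conj_ofReal, Complex.conj_conj,
        ← hKdef, Complex.ofReal_div]
      ring
    rw [Complex.normSq_sub, hcross, Complex.normSq_mul, regressionVector, Complex.normSq_div,
      Complex.normSq_mul, Complex.normSq_conj, Complex.normSq_ofReal, Complex.normSq_ofReal,
      ← hKdef]
    field_simp
  have hcross : ∑ k, (x k * v k * conj t).re = Complex.normSq t := by
    rw [← Complex.re_sum, ← sum_mul, ← Complex.ofReal_re (Complex.normSq t), ← Complex.mul_conj]
    rfl
  simp only [hterm, sum_add_distrib, sum_sub_distrib, ← mul_sum, hcross]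
  rw [← dotProductVariance, ← hKdef]
  field_simp
  ring

lemma gaussianVectorPDF_sub_regressionVector_mul (hc : ∀ k, 0 < c k) {v : ι → ℂ} (hv : v ≠ 0)
    (x : ι → ℂ) :
    gaussianVectorPDF c (x - (x ⬝ᵥ v) • regressionVector c v) *
        complexGaussianPDF (dotProductVariance c v) (x ⬝ᵥ v) =
      (2 * Real.pi * dotProductVariance c v)⁻¹ * gaussianVectorPDF c x := by
  have hexponent : ∑ k, -Complex.normSq (x k - (x ⬝ᵥ v) * regressionVector c v k) / (2 * c k) +
      -Complex.normSq (x ⬝ᵥ v) / (2 * dotProductVariance c v) =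
        ∑ k, -Complex.normSq (x k) / (2 * c k) := by
    simp only [neg_div, sum_neg_distrib, mul_comm (2 : ℝ), ← div_div, ← sum_div]
    rw [← sum_normSq_sub_smul_regressionVector_div hc hv x]
    ring
  simp only [gaussianVectorPDF, complexGaussianPDF, prod_mul_distrib, ← Real.exp_sum, Pi.sub_apply,
    Pi.smul_apply, smul_eq_mul, ← hexponent, Real.exp_add]
  ring

variable {κ : Type*}

/-- The matrix `R` for which `x ᵥ* R` is the residual of the regression of `x ᵥ* D` on `x ⬝ᵥ v`, for
`x` with density `gaussianVectorPDF c`. -/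
def residualMatrix (c : ι → ℝ) (v : ι → ℂ) (D : Matrix ι κ ℂ) : Matrix ι κ ℂ :=
  D - Matrix.vecMulVec v (regressionVector c v ᵥ* D)

lemma of_sub_rankOne_mul (c : ι → ℝ) (v : ι → ℂ) (D : Matrix ι κ ℂ) (F : κ → ι → ℂ) :
    Matrix.of (F - rankOne (regressionVector c v) (evalForms v F)) * D =
      Matrix.of F * residualMatrix c v D := by
  have hrank : Matrix.of (rankOne (regressionVector c v) (evalForms v F)) =
      Matrix.of F * Matrix.vecMulVec v (regressionVector c v) := by
    rw [Matrix.mul_vecMulVec]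
    rfl
  rw [← Matrix.of_sub_of, hrank, residualMatrix, Matrix.sub_mul, Matrix.mul_sub, Matrix.mul_assoc,
    Matrix.vecMulVec_mul]

variable [Fintype κ] [DecidableEq κ]

theorem lintegral_normSq_det_sub_rankOne_mul_gaussian (hc : ∀ k, 0 < c k) {v : ι → ℂ} (hv : v ≠ 0)
    (D : Matrix ι κ ℂ) :
    ∫⁻ F : κ → ι → ℂ,
        ENNReal.ofReal (Complex.normSq
          (Matrix.of (F - rankOne (regressionVector c v) (evalForms v F)) * D).det) *
        ENNReal.ofReal (∏ i,
          gaussianVectorPDF c ((F - rankOne (regressionVector c v) (evalForms v F)) i)) *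
        ENNReal.ofReal (∏ i, complexGaussianPDF (dotProductVariance c v) (evalForms v F i)) =
      ENNReal.ofReal ((Fintype.card κ)! / (2 * Real.pi * dotProductVariance c v) ^ Fintype.card κ *
        (vecMulCovariance c (residualMatrix c v D)).det.re) := by
  have hK := dotProductVariance_pos hc hv
  have hpdf (F : κ → ι → ℂ) :
      (∏ i, gaussianVectorPDF c ((F - rankOne (regressionVector c v) (evalForms v F)) i)) *
          ∏ i, complexGaussianPDF (dotProductVariance c v) (evalForms v F i) =
        ((2 * Real.pi * dotProductVariance c v) ^ Fintype.card κ)⁻¹ *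
          ∏ i, gaussianVectorPDF c (F i) := by
    rw [← prod_mul_distrib, ← inv_pow, ← card_univ, ← prod_const, ← prod_mul_distrib]
    exact prod_congr rfl fun i _ => gaussianVectorPDF_sub_regressionVector_mul hc hv (F i)
  calc
    _ = ∫⁻ F : κ → ι → ℂ,
          ENNReal.ofReal ((2 * Real.pi * dotProductVariance c v) ^ Fintype.card κ)⁻¹ *
            ENNReal.ofReal (Complex.normSq (Matrix.of F * residualMatrix c v D).det *
              ∏ i, gaussianVectorPDF c (F i)) := by
        refine lintegral_congr fun F => ?_
        rw [mul_assoc, ← ENNReal.ofReal_mul (prod_nonneg fun i _ => gaussianVectorPDF_nonneg hc _),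
          hpdf, of_sub_rankOne_mul, ← ENNReal.ofReal_mul (Complex.normSq_nonneg _),
          ← ENNReal.ofReal_mul (by positivity), mul_left_comm]
    _ = _ := by
        rw [lintegral_const_mul' _ _ ENNReal.ofReal_ne_top,
          lintegral_normSq_det_mul_prod_gaussianVectorPDF hc, ← ENNReal.ofReal_mul (by positivity),
          ← mul_assoc, inv_mul_eq_div]

end Conditioning

end Gaussian

section ExponentialFamily

open scoped Matrix

variable {κ ι : Type*} [Fintype κ] [Fintype ι]

/-- The partition function `p ↦ ∑ₖ cₖ exp ⟨αₖ, p⟩` of the exponential family on the points `αₖ`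
with weights `cₖ`. -/
def partitionFunction (α : ι → κ → ℝ) (c : ι → ℝ) (p : κ → ℝ) : ℝ :=
  ∑ k, c k * Real.exp (α k ⬝ᵥ p)

/-- The Gibbs probability of the point `αₖ` at the parameter `p`. -/
def gibbsWeight (α : ι → κ → ℝ) (c : ι → ℝ) (p : κ → ℝ) (k : ι) : ℝ :=
  c k * Real.exp (α k ⬝ᵥ p) / partitionFunction α c p

/-- The mean of the Gibbs distribution at the parameter `p` (the moment map of the toric variety
with weights `αₖ`). -/
def gibbsMean (α : ι → κ → ℝ) (c : ι → ℝ) (p : κ → ℝ) : κ → ℝ :=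
  ∑ k, gibbsWeight α c p k • α k

/-- The covariance matrix of the Gibbs distribution at the parameter `p`. -/
def gibbsCovariance (α : ι → κ → ℝ) (c : ι → ℝ) (p : κ → ℝ) : Matrix κ κ ℝ :=
  ∑ k, gibbsWeight α c p k •
    Matrix.vecMulVec (α k - gibbsMean α c p) (α k - gibbsMean α c p)

variable {α : ι → κ → ℝ} {c : ι → ℝ}

section Moments

variable [Nonempty ι] (hc : ∀ k, 0 < c k)
include hc

lemma partitionFunction_pos (p : κ → ℝ) : 0 < partitionFunction α c p :=
  sum_pos (fun k _ => mul_pos (hc k) (Real.exp_pos _)) univ_nonempty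

lemma gibbsWeight_pos (p : κ → ℝ) (k : ι) : 0 < gibbsWeight α c p k :=
  div_pos (mul_pos (hc k) (Real.exp_pos _)) (partitionFunction_pos hc p)

lemma sum_gibbsWeight (p : κ → ℝ) : ∑ k, gibbsWeight α c p k = 1 := by
  simp only [gibbsWeight, ← sum_div]
  exact div_self (partitionFunction_pos hc p).ne'

lemma gibbsMean_mem_convexHull (p : κ → ℝ) : gibbsMean α c p ∈ convexHull ℝ (Set.range α) :=
  (convex_convexHull ℝ _).sum_mem (fun k _ => (gibbsWeight_pos hc p k).le) (sum_gibbsWeight hc p)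
    fun k _ => subset_convexHull ℝ _ ⟨k, rfl⟩

lemma sum_gibbsWeight_smul_sub_gibbsMean (p : κ → ℝ) :
    ∑ k, gibbsWeight α c p k • (α k - gibbsMean α c p) = 0 := by
  simp only [smul_sub, sum_sub_distrib, ← sum_smul, sum_gibbsWeight hc, one_smul]
  exact sub_self _

lemma gibbsCovariance_mulVec (p v : κ → ℝ) :
    gibbsCovariance α c p *ᵥ v =
      ∑ k, (gibbsWeight α c p k * ((α k - gibbsMean α c p) ⬝ᵥ v)) • α k := by
  have hcentred : ∑ k, gibbsWeight α c p k * ((α k - gibbsMean α c p) ⬝ᵥ v) = 0 := by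
    simp only [← smul_eq_mul, ← smul_dotProduct, ← sum_dotProduct,
      sum_gibbsWeight_smul_sub_gibbsMean hc, zero_dotProduct]
  calc
    _ = ∑ k, (gibbsWeight α c p k * ((α k - gibbsMean α c p) ⬝ᵥ v)) • (α k - gibbsMean α c p) := by
        simp only [gibbsCovariance, Matrix.sum_mulVec, Matrix.smul_mulVec, Matrix.vecMulVec_mulVec,
          op_smul_eq_smul, smul_smul]
    _ = _ := by
        simp only [smul_sub, sum_sub_distrib, ← sum_smul, hcentred, zero_smul, sub_zero]

omit [Nonempty ι] hc in
lemma dotProduct_gibbsCovariance_mulVec (p v : κ → ℝ) :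
    v ⬝ᵥ gibbsCovariance α c p *ᵥ v =
      ∑ k, gibbsWeight α c p k * ((α k - gibbsMean α c p) ⬝ᵥ v) ^ 2 := by
  simp only [gibbsCovariance, Matrix.sum_mulVec, Matrix.smul_mulVec, Matrix.vecMulVec_mulVec,
    op_smul_eq_smul, dotProduct_sum, dotProduct_smul, smul_eq_mul, sq]
  exact sum_congr rfl fun k _ => by rw [dotProduct_comm v]

lemma gibbsCovariance_det_nonneg [DecidableEq κ] (p : κ → ℝ) : 0 ≤ (gibbsCovariance α c p).det :=
  (Matrix.posSemidef_sum _ fun k _ => (Matrix.posSemidef_vecMulVec_self_star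
    (α k - gibbsMean α c p)).smul (gibbsWeight_pos hc p k).le).det_nonneg

omit [Fintype ι] [Nonempty ι] hc in
lemma hasFDerivAt_boltzmannFactor (p : κ → ℝ) (k : ι) :
    HasFDerivAt (fun p => c k * Real.exp (α k ⬝ᵥ p))
      ((c k * Real.exp (α k ⬝ᵥ p)) • (dotProductBilin ℝ ℝ (α k)).toContinuousLinearMap) p := by
  rw [mul_smul]
  exact ((dotProductBilin ℝ ℝ (α k)).toContinuousLinearMap.hasFDerivAt (x := p)).exp.const_mul (c k)

lemma hasFDerivAt_partitionFunction (p : κ → ℝ) :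
    HasFDerivAt (partitionFunction α c)
      (partitionFunction α c p • (dotProductBilin ℝ ℝ (gibbsMean α c p)).toContinuousLinearMap)
      p := by
  refine (HasFDerivAt.fun_sum fun k (_ : k ∈ univ) =>
    hasFDerivAt_boltzmannFactor (α := α) (c := c) p k).congr_fderiv ?_
  ext1 v
  have hZ := (partitionFunction_pos hc (α := α) p).ne'
  simp [gibbsMean, gibbsWeight, mul_sum, ← mul_assoc, mul_div_cancel₀, hZ]

lemma hasFDerivAt_gibbsWeight (p : κ → ℝ) (k : ι) :
    HasFDerivAt (gibbsWeight α c · k)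
      (gibbsWeight α c p k •
        (dotProductBilin ℝ ℝ (α k - gibbsMean α c p)).toContinuousLinearMap) p := by
  have hZ := (partitionFunction_pos hc (α := α) p).ne'
  refine ((hasFDerivAt_boltzmannFactor (α := α) (c := c) p k).fun_mul
    ((hasDerivAt_inv hZ).comp_hasFDerivAt p (hasFDerivAt_partitionFunction hc p))).congr_fderiv ?_
  ext1 v
  simp only [neg_smul, smul_neg, Function.comp_apply, add_apply, neg_apply, smul_apply,
    LinearMap.coe_toContinuousLinearMap', dotProductBilin_apply_apply, smul_eq_mul, gibbsWeight,
    map_sub, sub_apply]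
  field_simp
  ring

lemma hasFDerivAt_gibbsMean (p : κ → ℝ) :
    HasFDerivAt (gibbsMean α c) (gibbsCovariance α c p).mulVecLin.toContinuousLinearMap p := by
  have h := HasFDerivAt.fun_sum fun k (_ : k ∈ univ) =>
    (hasFDerivAt_gibbsWeight (α := α) hc p k).smul_const (α k)
  refine h.congr_fderiv ?_
  ext1 v
  simp [gibbsCovariance_mulVec hc]

lemma continuous_gibbsMean : Continuous (gibbsMean α c) :=
  continuous_iff_continuousAt.2 fun p => (hasFDerivAt_gibbsMean hc p).continuousAt

lemma continuous_det_gibbsCovariance [DecidableEq κ] :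
    Continuous fun p => (gibbsCovariance α c p).det := by
  have hw (k : ι) : Continuous (gibbsWeight α c · k) :=
    continuous_iff_continuousAt.2 fun p => (hasFDerivAt_gibbsWeight hc p k).continuousAt
  have hm := continuous_gibbsMean (α := α) hc
  unfold gibbsCovariance
  fun_prop

omit hc [Nonempty ι] in
lemma gibbsWeight_sub_const (x p : κ → ℝ) (k : ι) :
    gibbsWeight (fun k => α k - x) c p k = gibbsWeight α c p k := by
  simp only [gibbsWeight, partitionFunction, sub_dotProduct, Real.exp_sub, ← mul_div_assoc,
    ← sum_div]
  exact div_div_div_cancel_right₀ (Real.exp_ne_zero _) _ _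

lemma gibbsMean_sub_const (x p : κ → ℝ) :
    gibbsMean (fun k => α k - x) c p = gibbsMean α c p - x := by
  simp only [gibbsMean, gibbsWeight_sub_const, smul_sub, sum_sub_distrib, ← sum_smul,
    sum_gibbsWeight hc, one_smul]

end Moments

section MomentMap

lemma sq_norm_le_dotProduct_self (v : κ → ℝ) : ‖v‖ ^ 2 ≤ v ⬝ᵥ v := by
  have hnonneg : 0 ≤ v ⬝ᵥ v := sum_nonneg fun i _ => mul_self_nonneg (v i)
  rw [← Real.le_sqrt (norm_nonneg v) hnonneg, pi_norm_le_iff_of_nonneg (Real.sqrt_nonneg _)]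
  refine fun i => Real.abs_le_sqrt ?_
  rw [sq]
  exact single_le_sum (f := fun i => v i * v i) (fun i _ => mul_self_nonneg (v i)) (mem_univ i)

omit [Fintype ι] in
lemma exists_forall_exists_mul_norm_le_sub_dotProduct {x : κ → ℝ}
    (hx : x ∈ interior (convexHull ℝ (Set.range α))) :
    ∃ ε > 0, ∀ v, ∃ k, ε * ‖v‖ ≤ (α k - x) ⬝ᵥ v := by
  obtain ⟨ε, hε, hball⟩ :=
    Metric.nhds_basis_closedBall.mem_iff.1 (mem_interior_iff_mem_nhds.1 hx)
  refine ⟨ε, hε, fun v => ?_⟩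
  have hy : x + (ε / ‖v‖) • v ∈ convexHull ℝ (Set.range α) := by
    refine hball ?_
    rw [Metric.mem_closedBall, dist_self_add_left, norm_smul, norm_div, norm_norm,
      Real.norm_of_nonneg hε.le, div_mul_eq_mul_div, mul_div_assoc]
    exact mul_le_of_le_one_right hε.le (div_self_le_one _)
  obtain ⟨_, ⟨k, rfl⟩, hk⟩ := ((LinearMap.convexOn ((dotProductBilin ℝ ℝ).flip v)
    (convex_convexHull ℝ (Set.range α)))).exists_ge_of_mem_convexHull (subset_convexHull ℝ _) hy
  have hscale : ε * ‖v‖ ≤ (ε / ‖v‖) * (v ⬝ᵥ v) := by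
    rcases eq_or_ne v 0 with rfl | hv
    · simp
    · have := norm_pos_iff.2 hv
      calc ε * ‖v‖ = ε / ‖v‖ * ‖v‖ ^ 2 := by field_simp
        _ ≤ _ := by gcongr; exact sq_norm_le_dotProduct_self v
  have hk' : x ⬝ᵥ v + ε / ‖v‖ * (v ⬝ᵥ v) ≤ α k ⬝ᵥ v := by simpa [add_dotProduct] using hk
  refine ⟨k, ?_⟩
  rw [sub_dotProduct]
  linarith

variable [Nonempty ι] (hc : ∀ k, 0 < c k)
  (hhull : (interior (convexHull ℝ (Set.range α))).Nonempty)
include hc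

include hhull in
lemma dotProduct_gibbsCovariance_mulVec_pos (p : κ → ℝ) {v : κ → ℝ} (hv : v ≠ 0) :
    0 < v ⬝ᵥ gibbsCovariance α c p *ᵥ v := by
  have hterm (k : ι) : 0 ≤ gibbsWeight α c p k * ((α k - gibbsMean α c p) ⬝ᵥ v) ^ 2 :=
    mul_nonneg (gibbsWeight_pos hc p k).le (sq_nonneg _)
  rw [dotProduct_gibbsCovariance_mulVec]
  refine (sum_nonneg fun k _ => hterm k).lt_of_ne' fun hzero => ?_
  have hconst (k : ι) : α k ⬝ᵥ v = gibbsMean α c p ⬝ᵥ v := by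
    have := (sum_eq_zero_iff_of_nonneg fun k _ => hterm k).1 hzero k (mem_univ k)
    simpa [(gibbsWeight_pos hc p k).ne', sub_dotProduct, sub_eq_zero] using this
  obtain ⟨x, hx⟩ := hhull
  obtain ⟨ε, hε, hα⟩ := exists_forall_exists_mul_norm_le_sub_dotProduct hx
  obtain ⟨k, hk⟩ := hα v
  obtain ⟨l, hl⟩ := hα (-v)
  have := mul_pos hε (norm_pos_iff.2 hv)
  rw [sub_dotProduct, hconst] at hk
  rw [norm_neg, dotProduct_neg, sub_dotProduct, hconst] at hl
  linarith

include hhull in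
lemma gibbsMean_injective : Function.Injective (gibbsMean α c) := by
  intro p q hpq
  by_contra hne
  have hv : q - p ≠ 0 := sub_ne_zero.2 (Ne.symm hne)
  have hderiv (t : ℝ) : HasDerivAt (fun t : ℝ => (q - p) ⬝ᵥ gibbsMean α c (p + t • (q - p)))
      ((q - p) ⬝ᵥ gibbsCovariance α c (p + t • (q - p)) *ᵥ (q - p)) t := by
    have hline : HasDerivAt (fun t : ℝ => p + t • (q - p)) (q - p) t := by
      simpa using ((hasDerivAt_id t).smul_const (q - p)).const_add p
    have hmean := (hasFDerivAt_gibbsMean (α := α) hc _).comp_hasDerivAt t hline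
    exact (dotProductBilin ℝ ℝ (q - p)).toContinuousLinearMap.hasFDerivAt.comp_hasDerivAt t hmean
  have hmono := strictMono_of_deriv_pos fun t => by
    rw [(hderiv t).deriv]
    exact dotProduct_gibbsCovariance_mulVec_pos hc hhull _ hv
  have := hmono zero_lt_one
  simp [hpq] at this

lemma exists_forall_mul_norm_le_partitionFunction_sub {x : κ → ℝ}
    (hx : x ∈ interior (convexHull ℝ (Set.range α))) :
    ∃ r > 0, ∀ p, r * ‖p‖ ≤ partitionFunction (fun k => α k - x) c p := by
  obtain ⟨ε, hε, hα⟩ := exists_forall_exists_mul_norm_le_sub_dotProduct hx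
  obtain ⟨k₀, hk₀⟩ := Finite.exists_min c
  refine ⟨c k₀ * ε, mul_pos (hc k₀) hε, fun p => ?_⟩
  obtain ⟨k, hk⟩ := hα p
  calc c k₀ * ε * ‖p‖
      ≤ c k * Real.exp ((α k - x) ⬝ᵥ p) := by
        rw [mul_assoc]
        have := Real.add_one_le_exp ((α k - x) ⬝ᵥ p)
        exact mul_le_mul (hk₀ k) (by linarith) (by positivity) (hc k).le
    _ ≤ partitionFunction (fun k => α k - x) c p :=
        single_le_sum (f := fun k => c k * Real.exp ((α k - x) ⬝ᵥ p))
          (fun k _ => mul_nonneg (hc k).le (Real.exp_pos _).le) (mem_univ k)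

-- The partition function of `α - x` grows linearly, and at a minimum its logarithmic gradient
-- `gibbsMean α c p - x` vanishes.
lemma interior_convexHull_subset_range_gibbsMean :
    interior (convexHull ℝ (Set.range α)) ⊆ Set.range (gibbsMean α c) := by
  intro x hx
  obtain ⟨r, hr, hle⟩ := exists_forall_mul_norm_le_partitionFunction_sub hc hx
  have hderiv := hasFDerivAt_partitionFunction (α := fun k => α k - x) hc
  have hcoercive : Filter.Tendsto (partitionFunction (fun k => α k - x) c)
      (Filter.cocompact _) Filter.atTop :=
    Filter.tendsto_atTop_mono hle (tendsto_norm_cocompact_atTop.const_mul_atTop hr)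
  obtain ⟨p, hp⟩ := Continuous.exists_forall_le
    (continuous_iff_continuousAt.2 fun p => (hderiv p).continuousAt) hcoercive
  have hcrit := IsLocalMin.hasFDerivAt_eq_zero (Filter.Eventually.of_forall hp) (hderiv p)
  refine ⟨p, sub_eq_zero.1 ?_⟩
  rw [← gibbsMean_sub_const hc, ← dotProduct_self_eq_zero]
  have := congrArg (fun L => L (gibbsMean (fun k => α k - x) c p)) hcrit
  simpa [(partitionFunction_pos hc (α := fun k => α k - x) p).ne'] using this

lemma encard_preimage_gibbsMean_ae_eq :
    (fun y => ((gibbsMean α c ⁻¹' {y}).encard : ℝ≥0∞)) =ᵐ[volume]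
      (convexHull ℝ (Set.range α)).indicator 1 := by
  have hfrontier := (convex_convexHull ℝ (Set.range α)).addHaar_frontier volume
  filter_upwards [measure_eq_zero_iff_ae_notMem.1 hfrontier] with y hy
  by_cases hmem : y ∈ convexHull ℝ (Set.range α)
  · have hint : y ∈ interior (convexHull ℝ (Set.range α)) := by
      by_contra h
      exact hy ⟨subset_closure hmem, h⟩
    obtain ⟨p, rfl⟩ := interior_convexHull_subset_range_gibbsMean hc hint
    rw [Set.indicator_of_mem hmem, ← Set.image_singleton,
      Set.preimage_image_eq _ (gibbsMean_injective hc ⟨_, hint⟩), Set.encard_singleton]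
    simp
  · have : gibbsMean α c ⁻¹' {y} = ∅ := Set.eq_empty_of_forall_notMem fun p hp =>
      hmem (hp ▸ gibbsMean_mem_convexHull hc p)
    rw [Set.indicator_of_notMem hmem, this, Set.encard_empty]
    simp

lemma lintegral_det_gibbsCovariance [DecidableEq κ] :
    ∫⁻ p, ENNReal.ofReal (gibbsCovariance α c p).det = volume (convexHull ℝ (Set.range α)) := by
  have hderiv := hasFDerivAt_gibbsMean (α := α) hc
  have hdet (p : κ → ℝ) : |(fderiv ℝ (gibbsMean α c) p).det| = (gibbsCovariance α c p).det := by
    rw [(hderiv p).fderiv, ContinuousLinearMap.det, LinearMap.coe_toContinuousLinearMap,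
      ← Matrix.toLin'_apply', LinearMap.det_toLin', abs_of_nonneg (gibbsCovariance_det_nonneg hc p)]
  have harea := lintegral_encard_fiber_mul volume (fun p => (hderiv p).differentiableAt)
    MeasurableSet.univ (measurable_const (a := (1 : ℝ≥0∞)))
  simp only [Set.univ_inter, mul_one, Measure.restrict_univ, hdet] at harea
  rw [← harea, lintegral_congr_ae (encard_preimage_gibbsMean_ae_eq hc),
    lintegral_indicator_one₀ ((convex_convexHull ℝ _).nullMeasurableSet volume)]

end MomentMap

end ExponentialFamily

section VeroneseZeros

open scoped Matrix

variable {κ ι : Type*} [Fintype κ]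

/-- The Veronese map `w ↦ (exp ⟨αₖ, w⟩)ₖ` of the exponents `αₖ`, in logarithmic coordinates: a
polynomial with these exponents and coefficients `f` takes the value `f ⬝ᵥ veronese α w` at
`exp w`. -/
def veronese (α : ι → κ → ℝ) (w : κ → ℂ) : ι → ℂ := fun k => Complex.exp (∑ j, α k j * w j)

variable {α : ι → κ → ℝ} {c : ι → ℝ}

lemma normSq_veronese (w : κ → ℂ) (k : ι) :
    Complex.normSq (veronese α w k) = Real.exp (α k ⬝ᵥ fun j => 2 * (w j).re) := by
  have hre : (∑ j, (α k j : ℂ) * w j).re = ∑ j, α k j * (w j).re := by simp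
  rw [Complex.normSq_eq_norm_sq, veronese, Complex.norm_exp, ← Real.exp_nat_mul, hre]
  simp only [dotProduct, Nat.cast_ofNat, mul_sum, mul_left_comm]

lemma veronese_ne_zero [Nonempty ι] (w : κ → ℂ) : veronese α w ≠ 0 :=
  Function.ne_iff.2 ⟨Classical.arbitrary ι, Complex.exp_ne_zero _⟩

lemma hasFDerivAt_veronese_apply (w : κ → ℂ) (k : ι) :
    HasFDerivAt (fun w => veronese α w k)
      (veronese α w k • ∑ j, (α k j : ℂ) • ContinuousLinearMap.proj (R := ℂ) j) w :=
  (HasFDerivAt.fun_sum fun j _ => (hasFDerivAt_apply j w).const_mul (α k j : ℂ)).cexp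

lemma differentiable_veronese : Differentiable ℂ (veronese α) :=
  differentiable_pi.2 fun k w => (hasFDerivAt_veronese_apply w k).differentiableAt

lemma veronese_sub_const (x : κ → ℝ) (w : κ → ℂ) :
    veronese (fun k => α k - x) w = Complex.exp (-∑ j, x j * w j) • veronese α w := by
  ext k
  simp [veronese, ← Complex.exp_add, sub_mul, sum_sub_distrib, neg_add_eq_sub]

lemma jacobianMatrix_veronese [DecidableEq κ] (w : κ → ℂ) :
    jacobianMatrix (veronese α) w = Matrix.of fun k j => veronese α w k * α k j := by
  have hderiv := hasFDerivAt_pi.2 fun k => hasFDerivAt_veronese_apply (α := α) w k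
  ext k j
  have : fderiv ℂ (veronese α) w = _ := hderiv.fderiv
  simp [jacobianMatrix, this, Pi.single_apply]

variable [Fintype ι]

lemma dotProductVariance_veronese (w : κ → ℂ) :
    dotProductVariance c (veronese α w) = partitionFunction α c fun j => 2 * (w j).re := by
  simp only [dotProductVariance, partitionFunction, normSq_veronese]

lemma regressionVector_veronese_mul (w : κ → ℂ) (k : ι) :
    regressionVector c (veronese α w) k * veronese α w k =
      gibbsWeight α c (fun j => 2 * (w j).re) k := by
  rw [regressionVector, dotProductVariance_veronese, div_mul_eq_mul_div, mul_assoc,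
    ← Complex.normSq_eq_conj_mul_self, normSq_veronese, gibbsWeight]
  push_cast
  rfl

lemma zeroCount_veronese_sub_const (S : Set (κ → ℂ)) (x : κ → ℝ) :
    zeroCount S (veronese fun k => α k - x) = zeroCount S (veronese α) := by
  funext F
  have hzero (w : κ → ℂ) :
      evalForms (veronese (fun k => α k - x) w) F = 0 ↔ evalForms (veronese α w) F = 0 := by
    simp [funext_iff, evalForms_apply, veronese_sub_const, Complex.exp_ne_zero]
  simp only [zeroCount, hzero]

variable [DecidableEq κ]

lemma residualMatrix_veronese (w : κ → ℂ) :
    residualMatrix c (veronese α w) (jacobianMatrix (veronese α) w) =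
      Matrix.of fun k j =>
        veronese α w k * ((α k - gibbsMean α c fun j => 2 * (w j).re) j : ℝ) := by
  have hmean : regressionVector c (veronese α w) ᵥ* jacobianMatrix (veronese α) w =
      fun j => (gibbsMean α c (fun j => 2 * (w j).re) j : ℂ) := by
    ext j
    simp only [jacobianMatrix_veronese, Matrix.vecMul, dotProduct, Matrix.of_apply, ← mul_assoc,
      regressionVector_veronese_mul]
    simp [gibbsMean]
  rw [residualMatrix, hmean, jacobianMatrix_veronese]
  ext k j
  simp [Matrix.vecMulVec_apply, mul_sub]

variable (hc : ∀ k, 0 < c k) [Nonempty ι]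
include hc

omit [DecidableEq κ] in
lemma mul_normSq_veronese (w : κ → ℂ) (k : ι) :
    c k * Complex.normSq (veronese α w k) =
      dotProductVariance c (veronese α w) * gibbsWeight α c (fun j => 2 * (w j).re) k := by
  rw [normSq_veronese, dotProductVariance_veronese, gibbsWeight,
    mul_div_cancel₀ _ (partitionFunction_pos hc _).ne']

lemma vecMulCovariance_residualMatrix_veronese (w : κ → ℂ) :
    vecMulCovariance c (residualMatrix c (veronese α w) (jacobianMatrix (veronese α) w)) =
      ((2 * dotProductVariance c (veronese α w)) •
        gibbsCovariance α c fun j => 2 * (w j).re).map Complex.ofRealHom := by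
  ext j l
  simp only [residualMatrix_veronese, vecMulCovariance, gibbsCovariance, Matrix.of_apply,
    Matrix.map_apply, Matrix.smul_apply, Matrix.sum_apply, Matrix.vecMulVec_apply, map_mul,
    map_sum, Complex.conj_ofReal, Complex.ofRealHom_eq_coe, smul_eq_mul, mul_sum,
    Complex.ofReal_ofNat]
  refine sum_congr rfl fun k _ => ?_
  have hweight := congrArg Complex.ofReal (mul_normSq_veronese hc w k (α := α))
  rw [Complex.ofReal_mul, Complex.ofReal_mul, Complex.normSq_eq_conj_mul_self] at hweight
  set d : κ → ℝ := α k - gibbsMean α c fun j => 2 * (w j).re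
  linear_combination 2 * (d j : ℂ) * (d l : ℂ) * hweight

lemma det_vecMulCovariance_residualMatrix_veronese (w : κ → ℂ) :
    (vecMulCovariance c
      (residualMatrix c (veronese α w) (jacobianMatrix (veronese α) w))).det.re =
      (2 * dotProductVariance c (veronese α w)) ^ Fintype.card κ *
        (gibbsCovariance α c fun j => 2 * (w j).re).det := by
  rw [vecMulCovariance_residualMatrix_veronese hc, ← RingHom.mapMatrix_apply, ← RingHom.map_det,
    Matrix.det_smul]
  exact Complex.ofReal_re _

end VeroneseZeros

section Strip

variable {κ : Type*}

/-- The fundamental domain of the logarithm: the `w` with all imaginary parts in `(-π, π]`. -/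
def logStrip (κ : Type*) : Set (κ → ℂ) := {w | ∀ j, (w j).im ∈ Set.Ioc (-Real.pi) Real.pi}

lemma measurableSet_logStrip [Countable κ] : MeasurableSet (logStrip κ) := by
  simp only [logStrip, Set.ofPred_forall]
  exact MeasurableSet.iInter fun j =>
    (Complex.measurable_im.comp (measurable_pi_apply j)) measurableSet_Ioc

variable [Fintype κ]

lemma lintegral_comp_two_smul {φ : (κ → ℝ) → ℝ≥0∞} (hφ : Measurable φ) :
    ∫⁻ p, φ ((2 : ℝ) • p) = ENNReal.ofReal ((2 ^ Fintype.card κ)⁻¹) * ∫⁻ p, φ p := by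
  rw [← lintegral_map hφ (measurable_const_smul (2 : ℝ)),
    Measure.map_addHaar_smul volume two_ne_zero, lintegral_smul_measure,
    Module.finrank_fintype_fun_eq_card, abs_of_pos (by positivity), smul_eq_mul]

lemma setLIntegral_logStrip_comp_re {φ : (κ → ℝ) → ℝ≥0∞} (hφ : Measurable φ) :
    ∫⁻ w in logStrip κ, φ (fun j => (w j).re) =
      ENNReal.ofReal (2 * Real.pi) ^ Fintype.card κ * ∫⁻ p, φ p := by
  let e : (κ → ℂ) ≃ᵐ (κ → ℝ) × (κ → ℝ) :=
    (MeasurableEquiv.piCongrRight fun _ => Complex.measurableEquivRealProd).trans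
      (MeasurableEquiv.arrowProdEquivProdArrow ℝ ℝ κ)
  have he : MeasurePreserving e :=
    (volume_measurePreserving_arrowProdEquivProdArrow ℝ ℝ κ).comp
      (volume_preserving_pi fun _ => Complex.volume_preserving_equiv_real_prod)
  have hstrip : logStrip κ =
      e ⁻¹' (Set.univ ×ˢ Set.univ.pi fun _ => Set.Ioc (-Real.pi) Real.pi) := by
    ext w
    simp only [Set.mem_preimage, Set.mem_prod, Set.mem_univ, true_and, Set.mem_univ_pi]
    rfl
  calc ∫⁻ w in logStrip κ, φ (fun j => (w j).re)
      = ∫⁻ x in Set.univ ×ˢ Set.univ.pi fun _ => Set.Ioc (-Real.pi) Real.pi, φ x.1 := by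
        rw [hstrip]
        exact he.setLIntegral_comp_preimage_emb e.measurableEmbedding (fun x => φ x.1) _
    _ = _ := by
        rw [Measure.volume_eq_prod, ← Measure.prod_restrict,
          lintegral_prod (fun x => φ x.1) (hφ.comp measurable_fst).aemeasurable]
        simp only [lintegral_const, Measure.restrict_apply_univ, Measure.restrict_univ,
          lintegral_mul_const _ hφ, Real.volume_pi_Ioc, sub_neg_eq_add, ← two_mul, prod_const,
          card_univ, mul_comm]

lemma setLIntegral_logStrip_comp_two_mul_re {φ : (κ → ℝ) → ℝ≥0∞} (hφ : Measurable φ) :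
    ∫⁻ w in logStrip κ, φ (fun j => 2 * (w j).re) =
      ENNReal.ofReal Real.pi ^ Fintype.card κ * ∫⁻ p, φ p := by
  have h := setLIntegral_logStrip_comp_re (hφ.comp (measurable_const_smul (2 : ℝ)))
  simp only [Function.comp_def, lintegral_comp_two_smul hφ] at h
  rw [← mul_assoc, ← ENNReal.ofReal_pow (by positivity),
    ← ENNReal.ofReal_mul (by positivity), mul_pow, mul_right_comm,
    mul_inv_cancel₀ (by positivity), one_mul, ENNReal.ofReal_pow Real.pi_pos.le] at h
  exact h

end Strip

section ExpectedZeros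

open scoped Matrix Nat

variable {κ ι : Type*} [Fintype κ] [Fintype ι] {α : ι → κ → ℝ} {c : ι → ℝ}

lemma aemeasurable_zeroCount_veronese [Nonempty ι] :
    AEMeasurable (zeroCount (logStrip κ) (veronese α)) := by
  classical
  obtain ⟨k₀⟩ := ‹Nonempty ι›
  rw [← zeroCount_veronese_sub_const _ (α k₀)]
  exact aemeasurable_zeroCount differentiable_veronese measurableSet_logStrip
    (e := Pi.single k₀ 1) fun w => by simp [veronese]

variable (hc : ∀ k, 0 < c k)
include hc

lemma lintegral_normSq_det_veronese_mul_gaussian [DecidableEq κ] [Nonempty ι] (w : κ → ℂ) :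
    ∫⁻ F : κ → ι → ℂ,
        ENNReal.ofReal (Complex.normSq (Matrix.of (F - rankOne (regressionVector c (veronese α w))
          (evalForms (veronese α w) F)) * jacobianMatrix (veronese α) w).det) *
        ENNReal.ofReal (∏ i, gaussianVectorPDF c ((F - rankOne (regressionVector c (veronese α w))
          (evalForms (veronese α w) F)) i)) *
        ENNReal.ofReal (∏ i, complexGaussianPDF (dotProductVariance c (veronese α w))
          (evalForms (veronese α w) F i)) =
      ENNReal.ofReal ((Fintype.card κ)! / Real.pi ^ Fintype.card κ) *
        ENNReal.ofReal (gibbsCovariance α c fun j => 2 * (w j).re).det := by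
  have hK := dotProductVariance_pos hc (veronese_ne_zero (α := α) w)
  rw [lintegral_normSq_det_sub_rankOne_mul_gaussian hc (veronese_ne_zero w),
    det_vecMulCovariance_residualMatrix_veronese hc, ← ENNReal.ofReal_mul (by positivity)]
  congr 1
  field_simp
  ring

lemma lintegral_zeroCount_veronese_of_eq_zero {k₀ : ι} (hk₀ : α k₀ = 0) :
    ∫⁻ F : κ → ι → ℂ, zeroCount (logStrip κ) (veronese α) F *
        ENNReal.ofReal (∏ i, gaussianVectorPDF c (F i)) =
      (Fintype.card κ)! * volume (convexHull ℝ (Set.range α)) := by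
  classical
  have : Nonempty ι := ⟨k₀⟩
  have hK (w : κ → ℂ) : 0 < dotProductVariance c (veronese α w) :=
    dotProductVariance_pos hc (veronese_ne_zero w)
  have he (w : κ → ℂ) : Pi.single k₀ 1 ⬝ᵥ veronese α w = 1 := by simp [veronese, hk₀]
  have hpdf := continuous_complexGaussianPDF
  have hpdf' := continuous_gaussianVectorPDF c
  rw [lintegral_zeroCount_mul differentiable_veronese measurableSet_logStrip he
    (fun w => regressionVector_dotProduct hc (veronese_ne_zero w))
    (ψ := fun w y => ENNReal.ofReal (∏ i, complexGaussianPDF (dotProductVariance c (veronese α w))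
      (y i))) (fun w => by fun_prop) (fun w => lintegral_prod_complexGaussianPDF (hK w))
    (by fun_prop)]
  simp only [lintegral_normSq_det_veronese_mul_gaussian hc]
  have hdet := (continuous_det_gibbsCovariance (α := α) hc).measurable.ennreal_ofReal
  rw [setLIntegral_logStrip_comp_two_mul_re (hdet.const_mul _), lintegral_const_mul _ hdet,
    lintegral_det_gibbsCovariance hc, ← mul_assoc, ← ENNReal.ofReal_pow Real.pi_pos.le,
    ← ENNReal.ofReal_mul (by positivity), mul_div_cancel₀ _ (by positivity), ENNReal.ofReal_natCast]

theorem lintegral_zeroCount_veronese [Nonempty ι] :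
    ∫⁻ F : κ → ι → ℂ, zeroCount (logStrip κ) (veronese α) F *
        ENNReal.ofReal (∏ i, gaussianVectorPDF c (F i)) =
      (Fintype.card κ)! * volume (convexHull ℝ (Set.range α)) := by
  classical
  obtain ⟨k₀⟩ := ‹Nonempty ι›
  have hhull : volume (convexHull ℝ (Set.range fun k => α k - α k₀)) =
      volume (convexHull ℝ (Set.range α)) := by
    have hrange : (Set.range fun k => α k - α k₀) = -α k₀ +ᵥ Set.range α := by
      rw [← Set.range_vadd]
      simp [vadd_eq_add, neg_add_eq_sub]
    rw [hrange, convexHull_vadd, measure_vadd]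
  have h := lintegral_zeroCount_veronese_of_eq_zero hc (α := fun k => α k - α k₀)
    (k₀ := k₀) (sub_self _)
  rwa [zeroCount_veronese_sub_const, hhull] at h

end ExpectedZeros

lemma lintegral_ncard_eq_lintegral_encard {Ω β : Type*} [MeasurableSpace Ω] {μ : Measure Ω}
    {s : Ω → Set β} (hm : AEMeasurable (fun ω => ((s ω).encard : ℝ≥0∞)) μ)
    (hfin : ∫⁻ ω, ((s ω).encard : ℝ≥0∞) ∂μ ≠ ∞) :
    ∫⁻ ω, ((s ω).ncard : ℝ≥0∞) ∂μ = ∫⁻ ω, ((s ω).encard : ℝ≥0∞) ∂μ := by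
  refine lintegral_congr_ae ?_
  filter_upwards [ae_lt_top' hm hfin] with ω hω
  have hs : (s ω).Finite := by simpa [Set.encard_lt_top_iff] using hω
  rw [← hs.cast_ncard_eq, ENat.toENNReal_coe]

section Laurent

open scoped Nat

variable {n : ℕ}

/-- The points of `A` as vectors of `ℝⁿ`. -/
def realExponents (A : Finset (Fin n → ℤ)) (a : A) : Fin n → ℝ := fun j => (a : Fin n → ℤ) j

variable {A : Finset (Fin n → ℤ)} {c : (Fin n → ℤ) → ℝ}

lemma coeA_eq_range_realExponents : coeA A = Set.range (realExponents A) := by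
  rw [coeA, Set.image_eq_range]
  rfl

lemma mono_exp (w : Fin n → ℂ) (a : A) :
    mono (fun j => Complex.exp (w j)) a = veronese (realExponents A) w a := by
  simp only [mono, veronese, realExponents, Complex.exp_sum, ← Complex.exp_int_mul,
    Complex.ofReal_intCast]

lemma isRootAt_exp_iff (f : Fin n → A → ℂ) (w : Fin n → ℂ) :
    isRootAt (fun _ => A) f (fun j => Complex.exp (w j)) ↔
      evalForms (veronese (realExponents A) w) f = 0 := by
  simp only [isRootAt, evalP, mono_exp, funext_iff, evalForms_apply, dotProduct, Pi.zero_apply]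

lemma injOn_exp_logStrip :
    Set.InjOn (fun (w : Fin n → ℂ) j => Complex.exp (w j)) (logStrip (Fin n)) := by
  intro w hw w' hw' h
  ext j
  exact Complex.exp_inj_of_neg_pi_lt_of_le_pi (hw j).1 (hw j).2 (hw' j).1 (hw' j).2 (congrFun h j)

lemma encard_roots_eq_zeroCount (f : Fin n → A → ℂ) :
    (({z | (∀ j, z j ≠ 0) ∧ isRootAt (fun _ => A) f z}.encard : ℕ∞) : ℝ≥0∞) =
      zeroCount (logStrip (Fin n)) (veronese (realExponents A)) f := by
  have himage : {z | (∀ j, z j ≠ 0) ∧ isRootAt (fun _ => A) f z} =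
      (fun (w : Fin n → ℂ) j => Complex.exp (w j)) ''
        (logStrip (Fin n) ∩ {w | evalForms (veronese (realExponents A) w) f = 0}) := by
    ext z
    constructor
    · rintro ⟨hz, hroot⟩
      have hlog : (fun j => Complex.exp (Complex.log (z j))) = z :=
        funext fun j => Complex.exp_log (hz j)
      refine ⟨fun j => Complex.log (z j),
        ⟨fun j => ⟨Complex.neg_pi_lt_log_im _, Complex.log_im_le_pi _⟩, ?_⟩, hlog⟩
      exact (isRootAt_exp_iff f _).1 (hlog.symm ▸ hroot)
    · rintro ⟨w, ⟨-, hw⟩, rfl⟩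
      exact ⟨fun j => Complex.exp_ne_zero _, (isRootAt_exp_iff f w).2 hw⟩
  rw [himage, (injOn_exp_logStrip.mono Set.inter_subset_left).encard_image, zeroCount]

lemma gauss_eq_withDensity_gaussianVectorPDF :
    gauss (fun _ : Fin n => A) (fun _ => c) =
      volume.withDensity fun f : Fin n → A → ℂ =>
        ENNReal.ofReal (∏ i, gaussianVectorPDF (fun a : A => c a) (f i)) := by
  unfold gauss
  congr! 4 with f i
  simp only [gaussianVectorPDF, complexGaussianPDF, nsq, prod_mul_distrib, ← Real.exp_sum, mul_inv,
    prod_inv_distrib, prod_const, card_univ, Fintype.card_coe]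
  congr 2
  · rw [mul_pow, mul_inv]
  · rw [← sum_neg_distrib, sum_div]
    exact sum_congr rfl fun a _ => by rw [← neg_div, div_div, mul_comm 2]

lemma aemeasurable_encard_roots (hA : A.Nonempty) :
    AEMeasurable (fun f : Fin n → A → ℂ =>
      (({z | (∀ j, z j ≠ 0) ∧ isRootAt (fun _ => A) f z}.encard : ℕ∞) : ℝ≥0∞))
      (gauss (fun _ => A) (fun _ => c)) := by
  have := hA.to_subtype
  simp only [encard_roots_eq_zeroCount]
  exact aemeasurable_zeroCount_veronese.mono_ac (withDensity_absolutelyContinuous _ _)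

theorem lintegral_encard_roots (hA : A.Nonempty) (hc : ∀ a ∈ A, 0 < c a) :
    ∫⁻ f, (({z | (∀ j, z j ≠ 0) ∧ isRootAt (fun _ => A) f z}.encard : ℕ∞) : ℝ≥0∞)
        ∂(gauss (fun _ : Fin n => A) (fun _ => c)) =
      n ! * volume (convexHull ℝ (coeA A)) := by
  have := hA.to_subtype
  have hpdf : Measurable fun f : Fin n → A → ℂ =>
      ENNReal.ofReal (∏ i, gaussianVectorPDF (fun a : A => c a) (f i)) := by
    have := continuous_gaussianVectorPDF fun a : A => c a
    fun_prop
  rw [gauss_eq_withDensity_gaussianVectorPDF, coeA_eq_range_realExponents,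
    lintegral_withDensity_eq_lintegral_mul_non_measurable _ hpdf (.of_forall fun f => by simp)]
  simp only [encard_roots_eq_zeroCount, Pi.mul_apply, mul_comm (ENNReal.ofReal _)]
  rw [lintegral_zeroCount_veronese fun a : A => hc a a.2, Fintype.card_fin]

-- Every point is a root of the empty system, and `Set.ncard` of an infinite set is `0`.
lemma ncard_roots_of_empty [NeZero n] (f : Fin n → (∅ : Finset (Fin n → ℤ)) → ℂ) :
    {z | (∀ j, z j ≠ 0) ∧ isRootAt (fun _ => ∅) f z}.ncard = 0 := by
  refine Set.Infinite.ncard ?_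
  have hinj : Function.Injective fun (k : ℕ) (_ : Fin n) => (k + 1 : ℂ) := fun k l h => by
    simpa using congrFun h 0
  refine (Set.infinite_range_of_injective hinj).mono ?_
  rintro _ ⟨k, rfl⟩
  exact ⟨fun _ => Nat.cast_add_one_ne_zero k, fun i => by simp [evalP]⟩

end Laurent

end SparseRandom

/-- For the unmixed complex random sparse polynomial system with support
`A` and covariance `C`, the expected number of roots in `(ℂ*)ⁿ` equals `n!·λ(Conv(A))`. -/
theorem statement3 (n : ℕ) (hn : 1 ≤ n) (A : Finset (Fin n → ℤ))
    (c : (Fin n → ℤ) → ℝ) (hc : ∀ a ∈ A, 0 < c a) :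
    ∫⁻ f, (Set.ncard {z : Fin n → ℂ |
        (∀ j, z j ≠ 0) ∧ isRootAt (fun _ : Fin n => A) f z} : ℝ≥0∞)
        ∂(gauss (fun _ : Fin n => A) (fun _ => c))
      = ENNReal.ofReal ((n.factorial : ℝ) * (volume (convexHull ℝ (coeA A))).toReal) := by
  have hvol : volume (convexHull ℝ (coeA A)) ≠ ∞ :=
    ((A.finite_toSet.image _).isCompact_convexHull (𝕜 := ℝ)).measure_lt_top.ne
  rw [ENNReal.ofReal_mul (by positivity), ENNReal.ofReal_toReal hvol, ENNReal.ofReal_natCast]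
  rcases A.eq_empty_or_nonempty with rfl | hA
  · have : NeZero n := ⟨by lia⟩
    simp [ncard_roots_of_empty, coeA]
  · have hmean := lintegral_encard_roots hA hc
    rw [lintegral_ncard_eq_lintegral_encard (aemeasurable_encard_roots hA)
      (hmean ▸ ENNReal.mul_ne_top (ENNReal.natCast_ne_top _) hvol), hmean]
end
end

section
/- Let A_1,…,A_n ⊂ ℤⁿ be finite sets whose convex hulls all have dimension n, with diagonal positive definite covariances C_1,…,C_n. Let (p,q) ∈ ℝⁿ×ℝⁿ, z := exp(p+iq), and let f ∈ ℱ satisfy f(z) = 0, ‖f^i‖_{C_i⁻¹} = 1 for every i, and D̂(f) invertible (z is a nondegenerate root). Then sup_{‖ḟ‖≤1} min_{1≤i≤n} ‖DG_f ḟ‖_{A_i} ≤ 1/d_ℙ(f, Σ_{(p,q)}) ≤ sup_{‖ḟ‖≤1} max_{1≤i≤n} ‖DG_f ḟ‖_{A_i}. -/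
open MeasureTheory Finset
open scoped ENNReal Pointwise

noncomputable section

namespace SparseRandom

variable {n : ℕ}

/-- The norm `‖u‖_A` on `ℂⁿ` induced by the Hermitian form `uᴴ·H_A(p)·u`. -/
def normA (H : Matrix (Fin n) (Fin n) ℝ) (u : Fin n → ℂ) : ℝ :=
  Real.sqrt ((∑ j, ∑ k, (starRingEnd ℂ) (u j) * (H j k : ℂ) * u k).re)

/-- The condition map `DG_f : ḟ ↦ D̂(f)⁻¹·(ḟ¹(z),…,ḟⁿ(z))ᵀ`. -/
def DG (A : Fin n → Finset (Fin n → ℤ)) (f : (i : Fin n) → (A i) → ℂ)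
    (z : Fin n → ℂ) (df : (i : Fin n) → (A i) → ℂ) : Fin n → ℂ :=
  (Dhat A f z)⁻¹.mulVec fun i => evalP (df i) z

/-- The norm `‖ḟ‖ = (∑ᵢ ‖ḟ^i‖²_{Cᵢ⁻¹})^{1/2}` on the system space. -/
def normSys (c : Fin n → (Fin n → ℤ) → ℝ) {A : Fin n → Finset (Fin n → ℤ)}
    (df : (i : Fin n) → (A i) → ℂ) : ℝ :=
  Real.sqrt (∑ i, nsq (c i) (df i))

end SparseRandom

open SparseRandom

/-!
Write `z = exp(p+iq)`. For the norm `‖·‖_{C⁻¹}` the evaluation `h ↦ h(z)` is a bounded functional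
whose squared norm is the kernel value `K = ∑ c_a |z^a|²`. On the hyperplane `h(z) = 0` the
logarithmic derivative of `h` in a direction `u` pairs `h` with the linear form `⟨a, u⟩` centered
at the barycenter of `A`, and since `H_A` is the covariance of the weights `c_a |z^a|² / K`, this
functional has squared norm `K ‖u‖²_A`.

A system `g` vanishing at `z` lies in `Σ_{(p,q)}` iff `D̂(g) u = 0` for some `u ≠ 0`, that is, iff
the perturbation `f - g` moves `D̂` by exactly `D̂(f)` in the direction `u`. Trading values at `z`
for derivatives along `u`, row by row and at least cost, gives two dual estimates: every
`g ∈ Σ_{(p,q)}` comes with some `w` such that `‖w‖ ≤ max_i ‖DG_f w‖_{A_i} ‖f - g‖`, and every `w`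
comes with some `g ∈ Σ_{(p,q)}` such that `min_i ‖DG_f w‖_{A_i} ‖f - g‖ ≤ ‖w‖`. Finally, `Σ_{(p,q)}`
is stable under rescaling the rows, so that the multiprojective distance from the normalized `f`
is the infimum of `‖f - g‖` over `g ∈ Σ_{(p,q)}`.
-/

namespace SparseRandom

lemma sum_mul_sub_mean_mul_sub_mean {ι K : Type*} [Fintype ι] [Field K] {w : ι → K}
    (hw : ∑ i, w i ≠ 0) (x y : ι → K) :
    ∑ i, w i * (x i - (∑ k, w k * x k) / ∑ k, w k) * (y i - (∑ k, w k * y k) / ∑ k, w k) =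
      ∑ i, w i * x i * y i - (∑ i, w i * x i) * (∑ i, w i * y i) / ∑ i, w i := by
  set X := (∑ k, w k * x k) / ∑ k, w k with hX
  set Y := (∑ k, w k * y k) / ∑ k, w k with hY
  calc
    _ = ∑ i, (w i * x i * y i - w i * x i * Y - w i * y i * X + w i * (X * Y)) :=
      Finset.sum_congr rfl fun i _ => by ring
    _ = ∑ i, w i * x i * y i - (∑ i, w i * x i) * Y - (∑ i, w i * y i) * X
        + (∑ i, w i) * (X * Y) := by
      simp only [Finset.sum_add_distrib, Finset.sum_sub_distrib, Finset.sum_mul]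
    _ = _ := by
      rw [hX, hY]
      field_simp
      ring

section LogSumExp

variable {ι E : Type*} [Fintype ι] [NormedAddCommGroup E] [NormedSpace ℝ E]

lemma hasFDerivAt_sum_mul_exp (w : ι → ℝ) (ℓ : ι → E →L[ℝ] ℝ) (x : E) :
    HasFDerivAt (fun y => ∑ i, w i * Real.exp (ℓ i y))
      (∑ i, (w i * Real.exp (ℓ i x)) • ℓ i) x := by
  refine HasFDerivAt.fun_sum fun i _ => ?_
  simpa only [smul_smul] using (ℓ i).hasFDerivAt.exp.const_mul (w i)

lemma fderiv_sum_mul_exp_apply (w : ι → ℝ) (ℓ : ι → E →L[ℝ] ℝ) (x v : E) :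
    fderiv ℝ (fun y => ∑ i, w i * Real.exp (ℓ i y)) x v =
      ∑ i, w i * Real.exp (ℓ i x) * ℓ i v := by
  simp only [(hasFDerivAt_sum_mul_exp w ℓ x).fderiv, _root_.sum_apply, smul_apply, smul_eq_mul]

variable [Nonempty ι] {w : ι → ℝ}

lemma sum_mul_exp_pos (hw : ∀ i, 0 < w i) (ℓ : ι → E →L[ℝ] ℝ) (x : E) :
    0 < ∑ i, w i * Real.exp (ℓ i x) :=
  Finset.sum_pos (fun i _ => mul_pos (hw i) (Real.exp_pos _)) Finset.univ_nonempty

lemma fderiv_log_sum_mul_exp_apply (hw : ∀ i, 0 < w i) (ℓ : ι → E →L[ℝ] ℝ) (x v : E) :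
    fderiv ℝ (fun y => Real.log (∑ i, w i * Real.exp (ℓ i y))) x v =
      (∑ i, w i * Real.exp (ℓ i x) * ℓ i v) / ∑ i, w i * Real.exp (ℓ i x) := by
  rw [((hasFDerivAt_sum_mul_exp w ℓ x).log (sum_mul_exp_pos hw ℓ x).ne').fderiv, smul_apply,
    ← (hasFDerivAt_sum_mul_exp w ℓ x).fderiv, fderiv_sum_mul_exp_apply, smul_eq_mul,
    inv_mul_eq_div]

lemma fderiv_fderiv_log_sum_mul_exp_apply (hw : ∀ i, 0 < w i) (ℓ : ι → E →L[ℝ] ℝ) (x u v : E) :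
    fderiv ℝ (fun y => fderiv ℝ (fun y => Real.log (∑ i, w i * Real.exp (ℓ i y))) y u) x v =
      (∑ i, w i * Real.exp (ℓ i x) *
        (ℓ i u - fderiv ℝ (fun y => Real.log (∑ i, w i * Real.exp (ℓ i y))) x u) *
        (ℓ i v - fderiv ℝ (fun y => Real.log (∑ i, w i * Real.exp (ℓ i y))) x v)) /
        ∑ i, w i * Real.exp (ℓ i x) := by
  have hZ := (sum_mul_exp_pos hw ℓ x).ne'
  have hderiv := (hasFDerivAt_sum_mul_exp (fun i => w i * ℓ i u) ℓ x).fun_mul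
    ((hasDerivAt_inv hZ).comp_hasFDerivAt x (hasFDerivAt_sum_mul_exp w ℓ x))
  simp only [Function.comp_apply] at hderiv
  simp only [fderiv_log_sum_mul_exp_apply hw, sum_mul_sub_mean_mul_sub_mean hZ]
  simp only [mul_right_comm (w _) (Real.exp _) (ℓ _ u), div_eq_mul_inv, hderiv.fderiv, add_apply,
    smul_apply, smul_eq_mul, ← (hasFDerivAt_sum_mul_exp _ ℓ x).fderiv, fderiv_sum_mul_exp_apply]
  field_simp
  ring

end LogSumExp

lemma le_sum_ciInf {ι κ : Type*} [Nonempty κ] (s : Finset ι) (F : ι → κ → ℝ) {D : ℝ}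
    (hD : ∀ t : ι → κ, D ≤ ∑ i ∈ s, F i (t i)) : D ≤ ∑ i ∈ s, ⨅ x, F i x := by
  classical
  induction s using Finset.induction_on generalizing D with
  | empty => simpa using hD
  | insert a s ha ih =>
    rw [Finset.sum_insert ha, ← sub_le_iff_le_add']
    refine ih fun t => ?_
    rw [sub_le_comm]
    refine le_ciInf fun x => ?_
    have hx := hD (Function.update t a x)
    rw [Finset.sum_insert ha, Function.update_self] at hx
    rw [sub_le_iff_le_add]
    refine hx.trans_eq (congrArg _ (Finset.sum_congr rfl fun i hi => ?_))
    rw [Function.update_of_ne (ne_of_mem_of_not_mem hi ha)]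

lemma ofReal_normSq_sum_ofReal_mul {ι : Type*} [Fintype ι] (d : ι → ℝ) (u : ι → ℂ) :
    ((Complex.normSq (∑ j, (d j : ℂ) * u j) : ℝ) : ℂ) =
      ∑ j, ∑ k, (starRingEnd ℂ) (u j) * ((d j * d k : ℝ) : ℂ) * u k := by
  rw [Complex.normSq_eq_conj_mul_self, map_sum, Finset.sum_mul_sum]
  refine Finset.sum_congr rfl fun j _ => Finset.sum_congr rfl fun k _ => ?_
  rw [map_mul, Complex.conj_ofReal]
  push_cast
  ring

variable {n : ℕ}

/-- The weight `c_a e^{2⟨a,p⟩} = c_a |z^a|²` of the exponent `a` at any `z = exp(p+iq)`. -/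
def weight (c : (Fin n → ℤ) → ℝ) (p : Fin n → ℝ) (a : Fin n → ℤ) : ℝ :=
  c a * Real.exp (2 * ∑ j, (a j : ℝ) * p j)

/-- The diagonal value `∑_{a∈A} c_a e^{2⟨a,p⟩}` of the reproducing kernel of `ℱ_ℂ(A)`, of which the
Kähler potential `g_A` is half the logarithm. -/
def kernelDiag (A : Finset (Fin n → ℤ)) (c : (Fin n → ℤ) → ℝ) (p : Fin n → ℝ) : ℝ :=
  ∑ a : A, weight c p a

/-- The momentum map `p ↦ ∇g_A(p)`: the barycenter of `A` for the weights `weight c p`. -/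
def momentumMap (A : Finset (Fin n → ℤ)) (c : (Fin n → ℤ) → ℝ) (p : Fin n → ℝ) : Fin n → ℝ :=
  fun j => (∑ a : A, weight c p a * ((a : Fin n → ℤ) j : ℝ)) / kernelDiag A c p

/-- The linear form `a ↦ ⟨a, u⟩` on `A`, centered at the barycenter `momentumMap A c p`. -/
def centered (A : Finset (Fin n → ℤ)) (c : (Fin n → ℤ) → ℝ) (p : Fin n → ℝ) (u : Fin n → ℂ) :
    A → ℂ :=
  fun a => ∑ j, (((a : Fin n → ℤ) j - momentumMap A c p j : ℝ) : ℂ) * u j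

/-- The squared norm of the functional `h ↦ evalP (h * y) z`, `z = exp(p+iq)`, which is dual to the
norm `‖·‖_{C⁻¹}` on `ℱ_ℂ(A)`. -/
def dualNsq {A : Finset (Fin n → ℤ)} (c : (Fin n → ℤ) → ℝ) (p : Fin n → ℝ) (y : A → ℂ) : ℝ :=
  ∑ a : A, weight c p a * Complex.normSq (y a)

section SingleSupport

variable {A : Finset (Fin n → ℤ)} {c : (Fin n → ℤ) → ℝ}

lemma weight_pos (hc : ∀ a ∈ A, 0 < c a) (p : Fin n → ℝ) (a : A) : 0 < weight c p a :=
  mul_pos (hc a a.2) (Real.exp_pos _)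

lemma kernelDiag_pos (hA : A.Nonempty) (hc : ∀ a ∈ A, 0 < c a) (p : Fin n → ℝ) :
    0 < kernelDiag A c p :=
  have : Nonempty A := hA.to_subtype
  Finset.sum_pos (fun a _ => weight_pos hc p a) Finset.univ_nonempty

lemma dualNsq_nonneg (hc : ∀ a ∈ A, 0 < c a) (p : Fin n → ℝ) (y : A → ℂ) : 0 ≤ dualNsq c p y :=
  Finset.sum_nonneg fun a _ => mul_nonneg (weight_pos hc p a).le (Complex.normSq_nonneg _)

lemma dualNsq_one (c : (Fin n → ℤ) → ℝ) (p : Fin n → ℝ) :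
    dualNsq c p (1 : A → ℂ) = kernelDiag A c p := by
  simp only [dualNsq, kernelDiag, Pi.one_apply, map_one, mul_one]

lemma nsq_nonneg (hc : ∀ a ∈ A, 0 < c a) (h : A → ℂ) : 0 ≤ nsq c h :=
  Finset.sum_nonneg fun a _ => div_nonneg (Complex.normSq_nonneg _) (hc a a.2).le

lemma nonempty_of_nsq_ne_zero {h : A → ℂ} (hh : nsq c h ≠ 0) : A.Nonempty := by
  obtain ⟨a, -⟩ := Finset.nonempty_of_sum_ne_zero hh
  exact ⟨a, a.2⟩

lemma nsq_smul (c : (Fin n → ℤ) → ℝ) (t : ℂ) (h : A → ℂ) :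
    nsq c (t • h) = Complex.normSq t * nsq c h := by
  simp only [nsq, Pi.smul_apply, smul_eq_mul, map_mul, mul_div_assoc, Finset.mul_sum]

lemma evalP_zero (z : Fin n → ℂ) : evalP (0 : A → ℂ) z = 0 := by
  simp only [evalP, Pi.zero_apply, zero_mul, Finset.sum_const_zero]

lemma evalP_sub (f g : A → ℂ) (z : Fin n → ℂ) : evalP (f - g) z = evalP f z - evalP g z := by
  simp only [evalP, Pi.sub_apply, sub_mul, Finset.sum_sub_distrib]

lemma evalP_smul (t : ℂ) (g : A → ℂ) (z : Fin n → ℂ) : evalP (t • g) z = t * evalP g z := by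
  simp only [evalP, Pi.smul_apply, smul_eq_mul, Finset.mul_sum, mul_assoc]

/-! ### The Hessian of the Kähler potential is a covariance -/

/-- The linear form `p ↦ 2⟨a, p⟩`, through which the weights depend on `p`. -/
def twicePairing (a : Fin n → ℤ) : (Fin n → ℝ) →L[ℝ] ℝ :=
  (2 : ℝ) • ∑ j, (a j : ℝ) • ContinuousLinearMap.proj j

lemma twicePairing_apply (a : Fin n → ℤ) (p : Fin n → ℝ) :
    twicePairing a p = 2 * ∑ j, (a j : ℝ) * p j := by
  simp [twicePairing]

lemma twicePairing_single (a : Fin n → ℤ) (j : Fin n) :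
    twicePairing a (Pi.single j 1) = 2 * a j := by
  simp [twicePairing_apply, Pi.single_apply]

lemma kernelDiag_eq_sum_mul_exp (A : Finset (Fin n → ℤ)) (c : (Fin n → ℤ) → ℝ) (p : Fin n → ℝ) :
    kernelDiag A c p = ∑ a : A, c a * Real.exp (twicePairing (a : Fin n → ℤ) p) := by
  simp only [kernelDiag, weight, twicePairing_apply]

lemma gA_eq_half_smul_log_kernelDiag (A : Finset (Fin n → ℤ)) (c : (Fin n → ℤ) → ℝ) :
    gA A c = (1 / 2 : ℝ) • fun p => Real.log (kernelDiag A c p) := rfl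

lemma fderiv_log_kernelDiag_single (hA : A.Nonempty) (hc : ∀ a ∈ A, 0 < c a) (p : Fin n → ℝ)
    (j : Fin n) :
    fderiv ℝ (fun x => Real.log (kernelDiag A c x)) p (Pi.single j 1) =
      2 * momentumMap A c p j := by
  have : Nonempty A := hA.to_subtype
  simp only [kernelDiag_eq_sum_mul_exp]
  rw [fderiv_log_sum_mul_exp_apply fun a : A => hc a a.2, ← kernelDiag_eq_sum_mul_exp]
  simp only [twicePairing_single, mul_left_comm _ (2 : ℝ), ← Finset.mul_sum, mul_div_assoc]
  simp only [twicePairing_apply, momentumMap, weight]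

lemma HessA_apply (hA : A.Nonempty) (hc : ∀ a ∈ A, 0 < c a) (p : Fin n → ℝ) (j k : Fin n) :
    HessA A c p j k = (∑ a : A, weight c p a *
      (((a : Fin n → ℤ) j : ℝ) - momentumMap A c p j) *
      (((a : Fin n → ℤ) k : ℝ) - momentumMap A c p k)) / kernelDiag A c p := by
  have : Nonempty A := hA.to_subtype
  have hgrad : (fun x => fderiv ℝ (gA A c) x (Pi.single j 1)) = (1 / 2 : ℝ) •
      fun x => fderiv ℝ (fun y => Real.log (kernelDiag A c y)) x (Pi.single j 1) := by
    rw [gA_eq_half_smul_log_kernelDiag, fderiv_const_smul_field]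
    rfl
  have hlog := fderiv_fderiv_log_sum_mul_exp_apply (fun a : A => hc a a.2)
    (fun a => twicePairing (a : Fin n → ℤ)) p (Pi.single j 1) (Pi.single k 1)
  simp only [← kernelDiag_eq_sum_mul_exp, fderiv_log_kernelDiag_single hA hc,
    twicePairing_single] at hlog
  rw [HessA, Matrix.of_apply, hgrad, fderiv_const_smul_field, Pi.smul_apply, smul_apply,
    smul_eq_mul]
  simp only [fderiv_log_kernelDiag_single hA hc]
  rw [hlog, mul_div_assoc', mul_div_assoc', Finset.mul_sum, Finset.mul_sum]
  refine congrArg (· / kernelDiag A c p) (Finset.sum_congr rfl fun a _ => ?_)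
  rw [twicePairing_apply, weight]
  ring

lemma kernelDiag_mul_normA_HessA_sq (hA : A.Nonempty) (hc : ∀ a ∈ A, 0 < c a) (p : Fin n → ℝ)
    (u : Fin n → ℂ) :
    kernelDiag A c p * normA (HessA A c p) u ^ 2 = dualNsq c p (centered A c p u) := by
  have hZ := kernelDiag_pos hA hc p
  have hform : ∑ j, ∑ k, (starRingEnd ℂ) (u j) * (HessA A c p j k : ℂ) * u k =
      ((dualNsq c p (centered A c p u) / kernelDiag A c p : ℝ) : ℂ) := by
    simp only [dualNsq, centered, Complex.ofReal_div, Complex.ofReal_sum, Complex.ofReal_mul,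
      ofReal_normSq_sum_ofReal_mul, HessA_apply hA hc, Finset.mul_sum, Finset.sum_mul,
      Finset.sum_div]
    calc
      _ = ∑ j, ∑ a, ∑ k, _ := Finset.sum_congr rfl fun j _ => Finset.sum_comm
      _ = ∑ a, ∑ j, ∑ k, _ := Finset.sum_comm
      _ = _ := Finset.sum_congr rfl fun a _ => Finset.sum_congr rfl fun j _ =>
        Finset.sum_congr rfl fun k _ => by ring
  rw [normA, hform, Complex.ofReal_re,
    Real.sq_sqrt (div_nonneg (dualNsq_nonneg hc p _) hZ.le), mul_div_cancel₀ _ hZ.ne']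

/-! ### Point evaluation and its derivative as functionals -/

lemma zexp_ne_zero (p q : Fin n → ℝ) (j : Fin n) : zexp p q j ≠ 0 := Complex.exp_ne_zero _

lemma normSq_mono_zexp (p q : Fin n → ℝ) (a : Fin n → ℤ) :
    Complex.normSq (mono (zexp p q) a) = Real.exp (2 * ∑ j, (a j : ℝ) * p j) := by
  have hfactor : ∀ j, ‖zexp p q j ^ a j‖ = Real.exp ((a j : ℝ) * p j) := fun j => by
    simp [norm_zpow, zexp, Complex.norm_exp, Real.exp_mul, mul_comm (a j : ℝ)]
  rw [Complex.normSq_eq_norm_sq, mono, norm_prod, Finset.prod_congr rfl fun j _ => hfactor j,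
    ← Real.exp_sum, ← Real.exp_nat_mul, Nat.cast_ofNat]

lemma normSq_evalP_mul_le (hc : ∀ a ∈ A, 0 < c a) (p q : Fin n → ℝ) (h y : A → ℂ) :
    Complex.normSq (evalP (h * y) (zexp p q)) ≤ nsq c h * dualNsq c p y := by
  rw [Complex.normSq_eq_norm_sq]
  refine (pow_le_pow_left₀ (norm_nonneg _) (norm_sum_le _ _) 2).trans ?_
  refine Finset.sum_sq_le_sum_mul_sum_of_sq_le_mul _
    (fun a _ => div_nonneg (Complex.normSq_nonneg _) (hc a a.2).le)
    (fun a _ => mul_nonneg (weight_pos hc p a).le (Complex.normSq_nonneg _)) fun a _ => ?_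
  have hca := (hc a a.2).ne'
  rw [← Complex.normSq_eq_norm_sq, Pi.mul_apply, map_mul, map_mul, normSq_mono_zexp, weight]
  refine le_of_eq ?_
  field_simp

lemma normSq_evalP_le (hc : ∀ a ∈ A, 0 < c a) (p q : Fin n → ℝ) (h : A → ℂ) :
    Complex.normSq (evalP h (zexp p q)) ≤ nsq c h * kernelDiag A c p := by
  simpa only [mul_one, dualNsq_one] using normSq_evalP_mul_le hc p q h 1

/-- The Riesz representer, for the inner product of `‖·‖_{C⁻¹}`, of the functional
`h ↦ evalP (h * y) z`. -/
def representer (c : (Fin n → ℤ) → ℝ) (z : Fin n → ℂ) (y : A → ℂ) : A → ℂ :=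
  fun a => (c a : ℂ) * (starRingEnd ℂ) (y a * mono z a)

lemma evalP_representer_mul (c : (Fin n → ℤ) → ℝ) (p q : Fin n → ℝ) (y x : A → ℂ) :
    evalP (representer c (zexp p q) y * x) (zexp p q) =
      ∑ a : A, (weight c p a : ℂ) * ((starRingEnd ℂ) (y a) * x a) := by
  refine Finset.sum_congr rfl fun a _ => ?_
  rw [weight, ← normSq_mono_zexp p q, Complex.ofReal_mul, Complex.normSq_eq_conj_mul_self,
    Pi.mul_apply, representer, map_mul]
  ring

lemma evalP_representer_mul_self (c : (Fin n → ℤ) → ℝ) (p q : Fin n → ℝ) (y : A → ℂ) :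
    evalP (representer c (zexp p q) y * y) (zexp p q) = (dualNsq c p y : ℂ) := by
  simp only [evalP_representer_mul, dualNsq, Complex.ofReal_sum, Complex.ofReal_mul,
    Complex.normSq_eq_conj_mul_self]

lemma nsq_representer (hc : ∀ a ∈ A, 0 < c a) (p q : Fin n → ℝ) (y : A → ℂ) :
    nsq c (representer c (zexp p q) y) = dualNsq c p y := by
  refine Finset.sum_congr rfl fun a _ => ?_
  have hca := (hc a a.2).ne'
  rw [representer, map_mul, Complex.normSq_conj, map_mul, normSq_mono_zexp, Complex.normSq_ofReal,
    weight]
  field_simp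

/-- The solution is the multiple of the representer of `y` with the prescribed value, hence it is
also annihilated by the functionals orthogonal to that of `y`. -/
lemma exists_evalP_mul_eq (hc : ∀ a ∈ A, 0 < c a) (p q : Fin n → ℝ) {y : A → ℂ}
    (hy : dualNsq c p y ≠ 0) (v : ℂ) :
    ∃ h : A → ℂ, evalP (h * y) (zexp p q) = v ∧ nsq c h = Complex.normSq v / dualNsq c p y ∧
      ∀ x : A → ℂ, ∑ a : A, (weight c p a : ℂ) * ((starRingEnd ℂ) (y a) * x a) = 0 →
        evalP (h * x) (zexp p q) = 0 := by
  refine ⟨(v / dualNsq c p y) • representer c (zexp p q) y, ?_, ?_, fun x hx => ?_⟩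
  · rw [smul_mul_assoc, evalP_smul, evalP_representer_mul_self,
      div_mul_cancel₀ _ (Complex.ofReal_ne_zero.2 hy)]
  · rw [nsq_smul, nsq_representer hc, map_div₀, Complex.normSq_ofReal]
    field_simp
  · rw [smul_mul_assoc, evalP_smul, evalP_representer_mul, hx, mul_zero]

lemma sum_weight_mul_sub_momentumMap (hA : A.Nonempty) (hc : ∀ a ∈ A, 0 < c a) (p : Fin n → ℝ)
    (j : Fin n) :
    ∑ a : A, weight c p a * (((a : Fin n → ℤ) j : ℝ) - momentumMap A c p j) = 0 := by
  simp only [mul_sub, Finset.sum_sub_distrib, ← Finset.sum_mul]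
  exact sub_eq_zero.2 (mul_div_cancel₀ _ (kernelDiag_pos hA hc p).ne').symm

lemma sum_weight_mul_centered (hA : A.Nonempty) (hc : ∀ a ∈ A, 0 < c a) (p : Fin n → ℝ)
    (u : Fin n → ℂ) :
    ∑ a : A, (weight c p a : ℂ) * centered A c p u a = 0 := by
  simp only [centered, Finset.mul_sum]
  rw [Finset.sum_comm]
  refine Finset.sum_eq_zero fun j _ => ?_
  simp only [← mul_assoc, ← Complex.ofReal_mul, ← Finset.sum_mul, ← Complex.ofReal_sum,
    sum_weight_mul_sub_momentumMap hA hc, Complex.ofReal_zero, zero_mul]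

lemma exists_evalP_eq (hA : A.Nonempty) (hc : ∀ a ∈ A, 0 < c a) (p q : Fin n → ℝ) (v : ℂ) :
    ∃ h : A → ℂ, evalP h (zexp p q) = v ∧ nsq c h * kernelDiag A c p = Complex.normSq v := by
  have hZ := (kernelDiag_pos hA hc p).ne'
  rw [← dualNsq_one] at hZ
  obtain ⟨h, hv, hnsq, -⟩ := exists_evalP_mul_eq hc p q hZ v
  exact ⟨h, mul_one h ▸ hv, by rw [hnsq, ← dualNsq_one, div_mul_cancel₀ _ hZ]⟩

lemma exists_evalP_eq_zero_evalP_mul_centered_eq (hA : A.Nonempty) (hc : ∀ a ∈ A, 0 < c a)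
    (p q : Fin n → ℝ) {u : Fin n → ℂ} (hu : normA (HessA A c p) u ≠ 0) (v : ℂ) :
    ∃ h : A → ℂ, evalP h (zexp p q) = 0 ∧ evalP (h * centered A c p u) (zexp p q) = v ∧
      nsq c h * (kernelDiag A c p * normA (HessA A c p) u ^ 2) = Complex.normSq v := by
  have hdual : dualNsq c p (centered A c p u) ≠ 0 := by
    rw [← kernelDiag_mul_normA_HessA_sq hA hc]
    exact mul_ne_zero (kernelDiag_pos hA hc p).ne' (pow_ne_zero 2 hu)
  obtain ⟨h, hv, hnsq, horth⟩ := exists_evalP_mul_eq hc p q hdual v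
  refine ⟨h, ?_, hv, ?_⟩
  · have hmean := congrArg (starRingEnd ℂ) (sum_weight_mul_centered hA hc p u)
    simp only [map_sum, map_mul, Complex.conj_ofReal, map_zero] at hmean
    rw [← mul_one h]
    exact horth 1 (by simpa only [Pi.one_apply, mul_one] using hmean)
  · rw [kernelDiag_mul_normA_HessA_sq hA hc, hnsq, div_mul_cancel₀ _ hdual]

end SingleSupport

/-! ### Systems with a prescribed degenerate root -/

section Systems

variable {A : Fin n → Finset (Fin n → ℤ)} {c : Fin n → (Fin n → ℤ) → ℝ}

lemma normSys_nonneg (c : Fin n → (Fin n → ℤ) → ℝ) (g : (i : Fin n) → A i → ℂ) :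
    0 ≤ normSys c g :=
  Real.sqrt_nonneg _

lemma normSys_sq (hc : ∀ i, ∀ a ∈ A i, 0 < c i a) (g : (i : Fin n) → A i → ℂ) :
    normSys c g ^ 2 = ∑ i, nsq (c i) (g i) :=
  Real.sq_sqrt (Finset.sum_nonneg fun i _ => nsq_nonneg (hc i) (g i))

lemma nsq_le_normSys_sq (hc : ∀ i, ∀ a ∈ A i, 0 < c i a) (g : (i : Fin n) → A i → ℂ)
    (i : Fin n) : nsq (c i) (g i) ≤ normSys c g ^ 2 := by
  rw [normSys_sq hc]
  exact Finset.single_le_sum (f := fun i => nsq (c i) (g i))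
    (fun i _ => nsq_nonneg (hc i) (g i)) (Finset.mem_univ i)

lemma normSys_le_mul_normSys (hc : ∀ i, ∀ a ∈ A i, 0 < c i a) {g h : (i : Fin n) → A i → ℂ}
    {r : ℝ} (hr : 0 ≤ r) (hgh : ∀ i, nsq (c i) (g i) ≤ r ^ 2 * nsq (c i) (h i)) :
    normSys c g ≤ r * normSys c h := by
  refine (pow_le_pow_iff_left₀ (normSys_nonneg c g)
    (mul_nonneg hr (normSys_nonneg c h)) two_ne_zero).1 ?_
  rw [mul_pow, normSys_sq hc, normSys_sq hc, Finset.mul_sum]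
  exact Finset.sum_le_sum fun i _ => hgh i

lemma normSys_smul (c : Fin n → (Fin n → ℤ) → ℝ) {r : ℝ} (hr : 0 ≤ r)
    (g : (i : Fin n) → A i → ℂ) : normSys c ((r : ℂ) • g) = r * normSys c g := by
  simp only [normSys, Pi.smul_apply, nsq_smul, Complex.normSq_ofReal, ← Finset.mul_sum]
  rw [Real.sqrt_mul (mul_self_nonneg r), Real.sqrt_mul_self hr]

lemma Dhat_zero (z : Fin n → ℂ) : Dhat A 0 z = 0 := by
  ext i j
  simp [Dhat]

lemma Dhat_sub (f g : (i : Fin n) → A i → ℂ) (z : Fin n → ℂ) :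
    Dhat A (f - g) z = Dhat A f z - Dhat A g z := by
  ext i j
  simp [Dhat, sub_mul]

lemma Dhat_row_smul (t : Fin n → ℂ) (g : (i : Fin n) → A i → ℂ) (z : Fin n → ℂ) :
    Dhat A (fun i => t i • g i) z = Matrix.diagonal t * Dhat A g z := by
  ext i j
  simp [Dhat, Finset.mul_sum, mul_assoc]

lemma Dhat_mulVec_of_evalP_eq_zero {g : (i : Fin n) → A i → ℂ} {z : Fin n → ℂ} {i : Fin n}
    (hz : evalP (g i) z = 0) (c : (Fin n → ℤ) → ℝ) (p : Fin n → ℝ) (u : Fin n → ℂ) :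
    (Dhat A g z).mulVec u i = evalP (g i * centered (A i) c p u) z := by
  have hterm (a : A i) : (g i * centered (A i) c p u) a * mono z a =
      (∑ j, g i a * ((a : Fin n → ℤ) j : ℂ) * mono z a * u j) -
        g i a * mono z a * ∑ j, (momentumMap (A i) c p j : ℂ) * u j := by
    simp only [Pi.mul_apply, centered, Finset.mul_sum, Finset.sum_mul, ← Finset.sum_sub_distrib]
    refine Finset.sum_congr rfl fun j _ => ?_
    push_cast
    ring
  calc (Dhat A g z).mulVec u i
      = ∑ a : A i, ∑ j, g i a * ((a : Fin n → ℤ) j : ℂ) * mono z a * u j := by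
        rw [Finset.sum_comm]
        simp only [Matrix.mulVec, dotProduct, Dhat, Matrix.of_apply, Finset.sum_mul]
    _ = (∑ a : A i, ∑ j, g i a * ((a : Fin n → ℤ) j : ℂ) * mono z a * u j) -
        evalP (g i) z * ∑ j, (momentumMap (A i) c p j : ℂ) * u j := by
        rw [hz, zero_mul, sub_zero]
    _ = evalP (g i * centered (A i) c p u) z := by
        simp only [evalP, hterm, Finset.sum_sub_distrib, Finset.sum_mul]

lemma normSq_Dhat_mulVec_le (hA : ∀ i, (A i).Nonempty) (hc : ∀ i, ∀ a ∈ A i, 0 < c i a)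
    {p q : Fin n → ℝ} {g : (i : Fin n) → A i → ℂ} (hg : isRootAt A g (zexp p q))
    (u : Fin n → ℂ) (i : Fin n) :
    Complex.normSq ((Dhat A g (zexp p q)).mulVec u i) ≤
      nsq (c i) (g i) * (kernelDiag (A i) (c i) p * normA (HessA (A i) (c i) p) u ^ 2) := by
  rw [Dhat_mulVec_of_evalP_eq_zero (hg i) (c i) p, kernelDiag_mul_normA_HessA_sq (hA i) (hc i)]
  exact normSq_evalP_mul_le (hc i) p q (g i) _

lemma det_jac_zexp_eq_zero_iff (g : (i : Fin n) → A i → ℂ) (p q : Fin n → ℝ) :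
    (jac A g (zexp p q)).det = 0 ↔ (Dhat A g (zexp p q)).det = 0 := by
  have hfactor : Dhat A g (zexp p q) = jac A g (zexp p q) * Matrix.diagonal (zexp p q) := by
    ext i j
    rw [Matrix.mul_diagonal]
    simp only [Dhat, jac, Matrix.of_apply, Finset.sum_mul]
    exact Finset.sum_congr rfl fun a _ => (div_mul_cancel₀ _ (zexp_ne_zero p q j)).symm
  rw [hfactor, Matrix.det_mul, Matrix.det_diagonal, mul_eq_zero, or_iff_left]
  exact Finset.prod_ne_zero_iff.2 fun j _ => zexp_ne_zero p q j

lemma mem_SigmaPQ_iff_exists_mulVec_eq_zero {g : (i : Fin n) → A i → ℂ} {p q : Fin n → ℝ} :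
    g ∈ SigmaPQ A p q ↔
      isRootAt A g (zexp p q) ∧ ∃ u ≠ 0, (Dhat A g (zexp p q)).mulVec u = 0 := by
  rw [Matrix.exists_mulVec_eq_zero_iff, ← det_jac_zexp_eq_zero_iff]
  rfl

lemma zero_mem_SigmaPQ [Nonempty (Fin n)] (p q : Fin n → ℝ) : 0 ∈ SigmaPQ A p q := by
  refine ⟨fun i => evalP_zero _, ?_⟩
  rw [det_jac_zexp_eq_zero_iff, Dhat_zero, Matrix.det_zero]

lemma row_smul_mem_SigmaPQ {p q : Fin n → ℝ} (t : Fin n → ℂ) {g : (i : Fin n) → A i → ℂ}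
    (hg : g ∈ SigmaPQ A p q) : (fun i => t i • g i) ∈ SigmaPQ A p q := by
  refine ⟨fun i => ?_, ?_⟩
  · rw [evalP_smul, hg.1 i, mul_zero]
  · rw [det_jac_zexp_eq_zero_iff, Dhat_row_smul, Matrix.det_mul,
      (det_jac_zexp_eq_zero_iff g p q).1 hg.2, mul_zero]

/-! ### The multiprojective distance from a normalized system -/

lemma dPS_le_normSys_sub (hc : ∀ i, ∀ a ∈ A i, 0 < c i a) {f g : (i : Fin n) → A i → ℂ}
    (hf : ∀ i, nsq (c i) (f i) = 1) {S : Set ((i : Fin n) → A i → ℂ)} (hg : g ∈ S) :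
    dPS c f S ≤ normSys c (f - g) := by
  have hbdd : BddBelow (dP c f '' S) :=
    ⟨0, Set.forall_mem_image.2 fun _ _ => Real.sqrt_nonneg _⟩
  refine (csInf_le hbdd (Set.mem_image_of_mem _ hg)).trans
    (Real.sqrt_le_sqrt (Finset.sum_le_sum fun i _ => ?_))
  rw [hf, div_one]
  refine (ciInf_le ⟨0, Set.forall_mem_range.2 fun t => nsq_nonneg (hc i) _⟩ 1).trans_eq ?_
  simp only [one_mul]
  rfl

lemma le_dPS_of_forall_le_normSys_sub (hc : ∀ i, ∀ a ∈ A i, 0 < c i a)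
    {f : (i : Fin n) → A i → ℂ} (hf : ∀ i, nsq (c i) (f i) = 1)
    {S : Set ((i : Fin n) → A i → ℂ)} (hS : S.Nonempty)
    (hsmul : ∀ t : Fin n → ℂ, ∀ g ∈ S, (fun i => t i • g i) ∈ S) {d : ℝ} (hd₀ : 0 ≤ d)
    (hd : ∀ g ∈ S, d ≤ normSys c (f - g)) : d ≤ dPS c f S := by
  refine le_csInf (hS.image _) (Set.forall_mem_image.2 fun g hg => Real.le_sqrt_of_sq_le ?_)
  simp only [hf, div_one]
  refine le_sum_ciInf _ _ fun t => ?_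
  exact (pow_le_pow_left₀ hd₀ (hd _ (hsmul t g hg)) 2).trans_eq (normSys_sq hc _)

/-! ### The condition map -/

lemma normA_zero (H : Matrix (Fin n) (Fin n) ℝ) : normA H 0 = 0 := by
  simp [normA]

lemma normA_smul (H : Matrix (Fin n) (Fin n) ℝ) {r : ℝ} (hr : 0 ≤ r) (u : Fin n → ℂ) :
    normA H ((r : ℂ) • u) = r * normA H u := by
  have hform : ∑ j, ∑ k, (starRingEnd ℂ) (((r : ℂ) • u) j) * (H j k : ℂ) * ((r : ℂ) • u) k =
      ((r ^ 2 : ℝ) : ℂ) * ∑ j, ∑ k, (starRingEnd ℂ) (u j) * (H j k : ℂ) * u k := by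
    simp only [Finset.mul_sum, Pi.smul_apply, smul_eq_mul, map_mul, Complex.conj_ofReal]
    push_cast
    exact Finset.sum_congr rfl fun j _ => Finset.sum_congr rfl fun k _ => by ring
  rw [normA, hform, Complex.re_ofReal_mul, Real.sqrt_mul (sq_nonneg r), Real.sqrt_sq hr, normA]

lemma normA_le_mul_norm (H : Matrix (Fin n) (Fin n) ℝ) (u : Fin n → ℂ) :
    normA H u ≤ Real.sqrt (∑ j, ∑ k, |H j k|) * ‖u‖ := by
  rw [← Real.sqrt_sq (norm_nonneg u), ← Real.sqrt_mul' _ (sq_nonneg _)]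
  refine Real.sqrt_le_sqrt ((Complex.re_le_norm _).trans ?_)
  simp only [Finset.sum_mul]
  refine norm_sum_le_of_le _ fun j _ => norm_sum_le_of_le _ fun k _ => ?_
  rw [norm_mul, norm_mul, RCLike.norm_conj, Complex.norm_real, Real.norm_eq_abs]
  calc ‖u j‖ * |H j k| * ‖u k‖ ≤ ‖u‖ * |H j k| * ‖u‖ := by
        gcongr <;> exact norm_le_pi_norm u _
    _ = |H j k| * ‖u‖ ^ 2 := by ring

lemma DG_smul (f w : (i : Fin n) → A i → ℂ) (z : Fin n → ℂ) (t : ℂ) :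
    DG A f z (t • w) = t • DG A f z w := by
  rw [DG, DG, ← Matrix.mulVec_smul]
  exact congrArg _ (funext fun i => evalP_smul t (w i) z)

lemma Dhat_mulVec_DG {f : (i : Fin n) → A i → ℂ} {z : Fin n → ℂ} (hf : (Dhat A f z).det ≠ 0)
    (w : (i : Fin n) → A i → ℂ) :
    (Dhat A f z).mulVec (DG A f z w) = fun i => evalP (w i) z := by
  rw [DG, Matrix.mulVec_mulVec, Matrix.mul_nonsing_inv _ hf.isUnit, Matrix.one_mulVec]

lemma DG_eq_of_evalP_eq {f : (i : Fin n) → A i → ℂ} {z : Fin n → ℂ}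
    (hf : (Dhat A f z).det ≠ 0) {w : (i : Fin n) → A i → ℂ} {u : Fin n → ℂ}
    (hw : ∀ i, evalP (w i) z = (Dhat A f z).mulVec u i) : DG A f z w = u := by
  rw [DG, funext hw, Matrix.mulVec_mulVec, Matrix.nonsing_inv_mul _ hf.isUnit, Matrix.one_mulVec]

lemma norm_evalP_le (hc : ∀ i, ∀ a ∈ A i, 0 < c i a) (p q : Fin n → ℝ)
    (w : (i : Fin n) → A i → ℂ) :
    ‖fun i => evalP (w i) (zexp p q)‖ ≤
      ‖fun i => Real.sqrt (kernelDiag (A i) (c i) p)‖ * normSys c w := by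
  have hw := normSys_nonneg c w
  refine (pi_norm_le_iff_of_nonneg (mul_nonneg (norm_nonneg _) hw)).2 fun i => ?_
  calc ‖evalP (w i) (zexp p q)‖
      ≤ Real.sqrt (normSys c w ^ 2 * kernelDiag (A i) (c i) p) := by
        refine Real.le_sqrt_of_sq_le ?_
        rw [← Complex.normSq_eq_norm_sq]
        refine (normSq_evalP_le (hc i) p q (w i)).trans ?_
        exact mul_le_mul_of_nonneg_right (nsq_le_normSys_sq hc w i)
          (Finset.sum_nonneg fun a _ => (weight_pos (hc i) p a).le)
    _ = Real.sqrt (kernelDiag (A i) (c i) p) * normSys c w := by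
        rw [Real.sqrt_mul (sq_nonneg _), Real.sqrt_sq hw, mul_comm]
    _ ≤ _ := by
        gcongr
        exact (Real.le_norm_self _).trans
          (norm_le_pi_norm (fun i => Real.sqrt (kernelDiag (A i) (c i) p)) i)

lemma exists_norm_DG_le_mul_normSys (hc : ∀ i, ∀ a ∈ A i, 0 < c i a) (p q : Fin n → ℝ)
    (f : (i : Fin n) → A i → ℂ) :
    ∃ B, 0 ≤ B ∧ ∀ w : (i : Fin n) → A i → ℂ, ‖DG A f (zexp p q) w‖ ≤ B * normSys c w := by
  let D := LinearMap.toContinuousLinearMap (Dhat A f (zexp p q))⁻¹.mulVecLin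
  refine ⟨‖D‖ * ‖fun i => Real.sqrt (kernelDiag (A i) (c i) p)‖, by positivity, fun w => ?_⟩
  rw [mul_assoc]
  exact (D.le_opNorm _).trans
    (mul_le_mul_of_nonneg_left (norm_evalP_le hc p q w) (norm_nonneg D))

lemma bddAbove_range_iSup_normA_DG (hc : ∀ i, ∀ a ∈ A i, 0 < c i a) (p q : Fin n → ℝ)
    (f : (i : Fin n) → A i → ℂ) :
    BddAbove (Set.range fun w : {g : (i : Fin n) → A i → ℂ // normSys c g ≤ 1} =>
      ⨆ i, normA (HessA (A i) (c i) p) (DG A f (zexp p q) w)) := by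
  obtain ⟨B, hB, hDG⟩ := exists_norm_DG_le_mul_normSys hc p q f
  let C : Fin n → ℝ := fun i => Real.sqrt (∑ j, ∑ k, |HessA (A i) (c i) p j k|)
  have hC : ∀ i, 0 ≤ C i := fun i => Real.sqrt_nonneg _
  refine ⟨(∑ i, C i) * B, Set.forall_mem_range.2 fun w => Real.iSup_le (fun i => ?_)
    (mul_nonneg (Finset.sum_nonneg fun i _ => hC i) hB)⟩
  refine (normA_le_mul_norm _ _).trans (mul_le_mul ?_ ?_ (norm_nonneg _)
    (Finset.sum_nonneg fun i _ => hC i))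
  · exact Finset.single_le_sum (f := C) (fun i _ => hC i) (Finset.mem_univ i)
  · exact (hDG w).trans (mul_le_of_le_one_right hB w.2)

lemma iSup_normA_DG_le_mul_normSys (hc : ∀ i, ∀ a ∈ A i, 0 < c i a) (p q : Fin n → ℝ)
    (f : (i : Fin n) → A i → ℂ) {w : (i : Fin n) → A i → ℂ} (hw : 0 < normSys c w) :
    ⨆ i, normA (HessA (A i) (c i) p) (DG A f (zexp p q) w) ≤
      (⨆ w : {g : (i : Fin n) → A i → ℂ // normSys c g ≤ 1},
        ⨆ i, normA (HessA (A i) (c i) p) (DG A f (zexp p q) w)) * normSys c w := by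
  have hinv := inv_nonneg.2 hw.le
  have hunit : normSys c ((((normSys c w)⁻¹ : ℝ) : ℂ) • w) ≤ 1 :=
    (normSys_smul c hinv w).trans_le (inv_mul_cancel₀ hw.ne').le
  have hle := le_ciSup (bddAbove_range_iSup_normA_DG hc p q f) ⟨_, hunit⟩
  simp only [DG_smul, normA_smul _ hinv, ← Real.mul_iSup_of_nonneg hinv] at hle
  rwa [inv_mul_le_iff₀' hw] at hle

/-! ### Trading degenerate systems for perturbations -/

/-- If `D̂(g) u = 0`, then `D̂(f - g) u = D̂(f) u`; take for `w` the system of least norm taking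
the value `D̂(f) u` at `z`, so that `DG_f w = u`. -/
lemma exists_normSys_le_iSup_mul_normSys_sub (hA : ∀ i, (A i).Nonempty)
    (hc : ∀ i, ∀ a ∈ A i, 0 < c i a) {p q : Fin n → ℝ} {f g : (i : Fin n) → A i → ℂ}
    (hf : isRootAt A f (zexp p q)) (hdet : (Dhat A f (zexp p q)).det ≠ 0)
    (hg : g ∈ SigmaPQ A p q) :
    ∃ w : (i : Fin n) → A i → ℂ, 0 < normSys c w ∧
      normSys c w ≤
        (⨆ i, normA (HessA (A i) (c i) p) (DG A f (zexp p q) w)) * normSys c (f - g) := by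
  obtain ⟨hgz, u, hu, hgu⟩ := mem_SigmaPQ_iff_exists_mulVec_eq_zero.1 hg
  choose w hwz hw using fun i =>
    exists_evalP_eq (hA i) (hc i) p q ((Dhat A f (zexp p q)).mulVec u i)
  have hDG : DG A f (zexp p q) w = u := DG_eq_of_evalP_eq hdet hwz
  have hpos : 0 < normSys c w := by
    refine (normSys_nonneg c w).lt_of_ne' fun hzero => hu (norm_eq_zero.1 ?_)
    obtain ⟨B, -, hB⟩ := exists_norm_DG_le_mul_normSys hc p q f
    have hle := hB w
    rw [hDG, hzero, mul_zero] at hle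
    exact hle.antisymm (norm_nonneg u)
  have hfg : isRootAt A (f - g) (zexp p q) := fun i => by
    rw [Pi.sub_apply, evalP_sub, hf i, hgz i, sub_zero]
  have hle_iSup (i : Fin n) : normA (HessA (A i) (c i) p) u ≤
      ⨆ i, normA (HessA (A i) (c i) p) u :=
    le_ciSup (f := fun i => normA (HessA (A i) (c i) p) u) (Set.finite_range _).bddAbove i
  refine ⟨w, hpos, ?_⟩
  rw [hDG]
  refine normSys_le_mul_normSys hc (Real.iSup_nonneg fun i => Real.sqrt_nonneg _) fun i => ?_
  have hbound : nsq (c i) (w i) ≤ normA (HessA (A i) (c i) p) u ^ 2 * nsq (c i) ((f - g) i) := by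
    refine le_of_mul_le_mul_right ?_ (kernelDiag_pos (hA i) (hc i) p)
    have hle := normSq_Dhat_mulVec_le hA hc hfg u i
    rw [Dhat_sub, Matrix.sub_mulVec, hgu, sub_zero, ← hw i] at hle
    exact hle.trans_eq (by ring)
  exact hbound.trans (mul_le_mul_of_nonneg_right
    (pow_le_pow_left₀ (Real.sqrt_nonneg _) (hle_iSup i) 2) (nsq_nonneg (hc i) _))

/-- With `u = DG_f w`, let `h` be the least-norm system vanishing at `z` with `D̂(h) u` equal to
`D̂(f) u`; then `g = f - h` is degenerate in the direction `u`. -/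
lemma exists_mem_SigmaPQ_iInf_mul_normSys_sub_le [Nonempty (Fin n)] (hA : ∀ i, (A i).Nonempty)
    (hc : ∀ i, ∀ a ∈ A i, 0 < c i a) {p q : Fin n → ℝ} {f : (i : Fin n) → A i → ℂ}
    (hf : isRootAt A f (zexp p q)) (hdet : (Dhat A f (zexp p q)).det ≠ 0)
    (w : (i : Fin n) → A i → ℂ) :
    ∃ g ∈ SigmaPQ A p q,
      (⨅ i, normA (HessA (A i) (c i) p) (DG A f (zexp p q) w)) * normSys c (f - g) ≤
        normSys c w := by
  set u := DG A f (zexp p q) w with hu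
  set m := ⨅ i, normA (HessA (A i) (c i) p) u
  have hm (i : Fin n) : m ≤ normA (HessA (A i) (c i) p) u :=
    ciInf_le (Set.finite_range _).bddBelow i
  have hm₀ : 0 ≤ m := Real.iInf_nonneg fun i => Real.sqrt_nonneg _
  obtain hm_zero | hm_pos := hm₀.eq_or_lt
  · exact ⟨0, zero_mem_SigmaPQ p q, by rw [← hm_zero, zero_mul]; exact normSys_nonneg c w⟩
  choose h hz hhu hh using fun i =>
    exists_evalP_eq_zero_evalP_mul_centered_eq (hA i) (hc i) p q (hm_pos.trans_le (hm i)).ne'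
      (evalP (w i) (zexp p q))
  have hu₀ : u ≠ 0 := fun hu₀ => by
    have := hm_pos.trans_le (hm (Classical.arbitrary _))
    rw [hu₀, normA_zero] at this
    exact this.false
  have hDhat : (Dhat A h (zexp p q)).mulVec u = (Dhat A f (zexp p q)).mulVec u := by
    rw [hu, Dhat_mulVec_DG hdet, ← hu]
    exact funext fun i => (Dhat_mulVec_of_evalP_eq_zero (hz i) (c i) p u).trans (hhu i)
  refine ⟨f - h, mem_SigmaPQ_iff_exists_mulVec_eq_zero.2 ⟨fun i => ?_, u, hu₀, ?_⟩, ?_⟩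
  · rw [Pi.sub_apply, evalP_sub, hf i, hz i, sub_zero]
  · rw [Dhat_sub, Matrix.sub_mulVec, hDhat, sub_self]
  rw [sub_sub_cancel, ← le_inv_mul_iff₀ hm_pos]
  refine normSys_le_mul_normSys hc (inv_nonneg.2 hm₀) fun i => ?_
  have hZ := kernelDiag_pos (hA i) (hc i) p
  rw [inv_pow, le_inv_mul_iff₀ (pow_pos hm_pos 2), ← mul_le_mul_iff_left₀ hZ]
  calc m ^ 2 * nsq (c i) (h i) * kernelDiag (A i) (c i) p
      ≤ normA (HessA (A i) (c i) p) u ^ 2 * nsq (c i) (h i) * kernelDiag (A i) (c i) p := by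
        have hnsq := nsq_nonneg (hc i) (h i)
        gcongr
        exact hm i
    _ = Complex.normSq (evalP (w i) (zexp p q)) := by rw [← hh i]; ring
    _ ≤ nsq (c i) (w i) * kernelDiag (A i) (c i) p := normSq_evalP_le (hc i) p q (w i)

lemma iInf_normA_DG_mul_dPS_le [Nonempty (Fin n)] (hA : ∀ i, (A i).Nonempty)
    (hc : ∀ i, ∀ a ∈ A i, 0 < c i a) {p q : Fin n → ℝ} {f : (i : Fin n) → A i → ℂ}
    (hf : isRootAt A f (zexp p q)) (hnorm : ∀ i, nsq (c i) (f i) = 1)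
    (hdet : (Dhat A f (zexp p q)).det ≠ 0) (w : (i : Fin n) → A i → ℂ) :
    (⨅ i, normA (HessA (A i) (c i) p) (DG A f (zexp p q) w)) * dPS c f (SigmaPQ A p q) ≤
      normSys c w := by
  obtain ⟨g, hg, hle⟩ := exists_mem_SigmaPQ_iInf_mul_normSys_sub_le hA hc hf hdet w
  exact (mul_le_mul_of_nonneg_left (dPS_le_normSys_sub hc hnorm hg)
    (Real.iInf_nonneg fun i => Real.sqrt_nonneg _)).trans hle

lemma one_le_iSup_mul_normSys_sub (hA : ∀ i, (A i).Nonempty)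
    (hc : ∀ i, ∀ a ∈ A i, 0 < c i a) {p q : Fin n → ℝ} {f g : (i : Fin n) → A i → ℂ}
    (hf : isRootAt A f (zexp p q)) (hdet : (Dhat A f (zexp p q)).det ≠ 0)
    (hg : g ∈ SigmaPQ A p q) :
    1 ≤ (⨆ w : {g : (i : Fin n) → A i → ℂ // normSys c g ≤ 1},
      ⨆ i, normA (HessA (A i) (c i) p) (DG A f (zexp p q) w)) * normSys c (f - g) := by
  obtain ⟨w, hw, hle⟩ := exists_normSys_le_iSup_mul_normSys_sub hA hc hf hdet hg
  refine le_of_mul_le_mul_right ?_ hw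
  rw [one_mul, mul_right_comm]
  exact hle.trans
    (mul_le_mul_of_nonneg_right (iSup_normA_DG_le_mul_normSys hc p q f hw) (normSys_nonneg c _))

end Systems

end SparseRandom

theorem statement5_general (n : ℕ) (hn : 1 ≤ n) (A : Fin n → Finset (Fin n → ℤ))
    (c : Fin n → (Fin n → ℤ) → ℝ) (hc : ∀ i, ∀ a ∈ A i, 0 < c i a)
    (p q : Fin n → ℝ) (f : (i : Fin n) → (A i) → ℂ)
    (hroot : isRootAt A f (zexp p q))
    (hnorm : ∀ i, nsq (c i) (f i) = 1)
    (hnd : (Dhat A f (zexp p q)).det ≠ 0) :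
    (⨆ df : {g : (i : Fin n) → (A i) → ℂ // normSys c g ≤ 1},
        ⨅ i : Fin n, normA (HessA (A i) (c i) p) (DG A f (zexp p q) df))
      ≤ 1 / dPS c f (SigmaPQ A p q) ∧
    1 / dPS c f (SigmaPQ A p q)
      ≤ (⨆ df : {g : (i : Fin n) → (A i) → ℂ // normSys c g ≤ 1},
          ⨆ i : Fin n, normA (HessA (A i) (c i) p) (DG A f (zexp p q) df)) := by
  have : Nonempty (Fin n) := ⟨⟨0, hn⟩⟩
  have hA (i : Fin n) : (A i).Nonempty :=
    nonempty_of_nsq_ne_zero ((hnorm i).trans_ne one_ne_zero)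
  set M := ⨆ df : {g : (i : Fin n) → (A i) → ℂ // normSys c g ≤ 1},
    ⨆ i : Fin n, normA (HessA (A i) (c i) p) (DG A f (zexp p q) df)
  have hmul : ∀ g ∈ SigmaPQ A p q, 1 ≤ M * normSys c (f - g) := fun g hg =>
    one_le_iSup_mul_normSys_sub hA hc hroot hnd hg
  have hzero := zero_mem_SigmaPQ (A := A) p q
  have hM : 0 < M :=
    pos_of_mul_pos_left (one_pos.trans_le (hmul 0 hzero)) (normSys_nonneg c _)
  have hdist : M⁻¹ ≤ dPS c f (SigmaPQ A p q) :=
    le_dPS_of_forall_le_normSys_sub hc hnorm ⟨0, hzero⟩ (fun t _ => row_smul_mem_SigmaPQ t)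
      (inv_nonneg.2 hM.le) fun g hg => (inv_le_iff_one_le_mul₀' hM).2 (hmul g hg)
  have hpos : 0 < dPS c f (SigmaPQ A p q) := (inv_pos.2 hM).trans_le hdist
  refine ⟨Real.iSup_le (fun df => (le_div_iff₀ hpos).2 ?_) (one_div_nonneg.2 hpos.le),
    (one_div _).trans_le (inv_le_of_inv_le₀ hM hdist)⟩
  exact (iInf_normA_DG_mul_dPS_le hA hc hroot hnorm hnd df).trans df.2

/-- **Condition Number Theorem.** If `z = exp(p+iq)` is a nondegenerate root
of `f`, with all supports having full-dimensional convex hull and `‖f^i‖_{Cᵢ⁻¹} = 1`, then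
`sup_{‖ḟ‖≤1} min_i ‖DG_f ḟ‖_{A_i} ≤ 1/d_ℙ(f,Σ_{(p,q)}) ≤ sup_{‖ḟ‖≤1} max_i ‖DG_f ḟ‖_{A_i}`. -/
theorem statement5 (n : ℕ) (hn : 1 ≤ n) (A : Fin n → Finset (Fin n → ℤ))
    (hdim : ∀ i, affineSpan ℝ (coeA (A i)) = ⊤)
    (c : Fin n → (Fin n → ℤ) → ℝ) (hc : ∀ i, ∀ a ∈ A i, 0 < c i a)
    (p q : Fin n → ℝ) (f : (i : Fin n) → (A i) → ℂ)
    (hroot : isRootAt A f (zexp p q))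
    (hnorm : ∀ i, nsq (c i) (f i) = 1)
    (hnd : (Dhat A f (zexp p q)).det ≠ 0) :
    (⨆ df : {g : (i : Fin n) → (A i) → ℂ // normSys c g ≤ 1},
        ⨅ i : Fin n, normA (HessA (A i) (c i) p) (DG A f (zexp p q) df))
      ≤ 1 / dPS c f (SigmaPQ A p q) ∧
    1 / dPS c f (SigmaPQ A p q)
      ≤ (⨆ df : {g : (i : Fin n) → (A i) → ℂ // normSys c g ≤ 1},
          ⨆ i : Fin n, normA (HessA (A i) (c i) p) (DG A f (zexp p q) df)) :=
  statement5_general n hn A c hc p q f hroot hnorm hnd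
end
end
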